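/- arXiv:2407.20226 — 4 statements merged into one kernel-verified Lean document; each statement's English description precedes it below -/
import Mathlib

section
/- Let G be a finite connected simple graph, let w : E(G) → ℝ be an injective weight function, and let T be a spanning tree of G. Then T is the unique spanning tree of G minimizing the total weight ∑_{e∈T} w(e) if and only if for every edge e ∈ E(T) and every edge e' ∈ E(G) \ E(T) such that e lies on the unique path in T between the two endpoints of e', one has w(e) < w(e'). -/
open MeasureTheory SimpleGraph
open scoped Classical

noncomputable section

namespace RST

variable {V : Type*}

/-- The graph on `V` whose edge set is the finset `T`. -/
def spanGraph (T : Finset (Sym2 V)) : SimpleGraph V :=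
  SimpleGraph.fromEdgeSet ↑T

/-- `T` is (the edge set of) a spanning tree of `G`: a connected acyclic subgraph
containing all vertices. -/
def IsSpanningTree (G : SimpleGraph V) (T : Finset (Sym2 V)) : Prop :=
  ↑T ⊆ G.edgeSet ∧ (spanGraph T).Connected ∧ (spanGraph T).IsAcyclic

/-- Total weight `∑_{e ∈ T} w e` of the tree `T`. -/
def treeWeight (G : SimpleGraph V) [Fintype V] (w : G.edgeSet → ℝ) (T : Finset (Sym2 V)) : ℝ :=
  ∑ e : G.edgeSet, if (e : Sym2 V) ∈ T then w e else 0

/-- `e` lies on the (unique) path in the tree `T` joining the two endpoints of `e'`. -/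
def OnTreePath (T : Finset (Sym2 V)) (e e' : Sym2 V) : Prop :=
  ∀ (u v : V) (p : (spanGraph T).Walk u v), p.IsPath → e' = s(u, v) → e ∈ p.edges

lemma span_adj {T : Finset (Sym2 V)} {a b : V} :
    (spanGraph T).Adj a b ↔ s(a, b) ∈ T ∧ a ≠ b := by
  simp [spanGraph]

lemma span_mono {S T : Finset (Sym2 V)} (h : S ⊆ T) : spanGraph S ≤ spanGraph T := by
  intro a b hab
  rw [span_adj] at *
  exact ⟨h hab.1, hab.2⟩

lemma mem_iff_adj {G : SimpleGraph V} {T : Finset (Sym2 V)} (hT : IsSpanningTree G T) {a b : V} :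
    s(a, b) ∈ T ↔ (spanGraph T).Adj a b := by
  rw [span_adj]
  refine ⟨fun h => ⟨h, ?_⟩, fun h => h.1⟩
  have : s(a, b) ∈ G.edgeSet := hT.1 h
  exact G.ne_of_adj this

/-- Endpoints of a tree edge are separated by deleting it. -/
lemma not_reach {G : SimpleGraph V} {T : Finset (Sym2 V)} (hT : IsSpanningTree G T) {a b : V}
    (h : s(a, b) ∈ T) : ¬ (spanGraph (T.erase s(a, b))).Reachable a b := by
  have h1 := isAcyclic_iff_forall_isBridge.1 hT.2.2
    ((mem_edgeSet _).2 ((mem_iff_adj hT).1 h))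
  rw [isBridge_iff] at h1
  intro h2
  apply h1
  refine h2.mono ?_
  intro x y hxy
  rw [span_adj, Finset.mem_erase] at hxy
  rw [deleteEdges_adj, span_adj]
  exact ⟨⟨hxy.1.2, hxy.2⟩, hxy.1.1⟩

lemma side {T : Finset (Sym2 V)} {a b z c : V}
    (p : (spanGraph T).Walk z c) (hc : c = a) :
    (spanGraph (T.erase s(a, b))).Reachable z a ∨ (spanGraph (T.erase s(a, b))).Reachable z b := by
  induction p with
  | nil => subst hc; exact Or.inl (Reachable.refl _)
  | @cons x y d hxy p ih =>
    by_cases he : s(x, y) = s(a, b)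
    · rw [Sym2.eq_iff] at he
      rcases he with ⟨rfl, rfl⟩ | ⟨rfl, rfl⟩
      · exact Or.inl (Reachable.refl _)
      · exact Or.inr (Reachable.refl _)
    · have h : (spanGraph (T.erase s(a, b))).Adj x y := by
        rw [span_adj] at *
        exact ⟨Finset.mem_erase.2 ⟨he, hxy.1⟩, hxy.2⟩
      exact (ih hc).imp h.reachable.trans h.reachable.trans

/-- Exchange of an edge. -/
lemma exchange {G : SimpleGraph V} {T : Finset (Sym2 V)} (hT : IsSpanningTree G T) {f : Sym2 V}
    {x y : V} (hg : s(x, y) ∈ G.edgeSet)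
    (hxy : ¬ (spanGraph (T.erase f)).Reachable x y) :
    IsSpanningTree G (insert s(x, y) (T.erase f)) := by
  have hne : x ≠ y := G.ne_of_adj hg
  have hle : spanGraph (T.erase f) ≤ spanGraph (insert s(x, y) (T.erase f)) :=
    span_mono (Finset.subset_insert _ _)
  refine ⟨?_, ?_, ?_⟩
  · intro e he
    rw [Finset.mem_coe, Finset.mem_insert] at he
    rcases he with rfl | he
    · exact hg
    · exact hT.1 (Finset.mem_of_mem_erase he)
  · induction f with
    | h a b =>
    have hs : ∀ z, (spanGraph (T.erase s(a, b))).Reachable z a ∨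
        (spanGraph (T.erase s(a, b))).Reachable z b := by
      intro z
      obtain ⟨p⟩ := hT.2.1.preconnected z a
      exact side p rfl
    have hadj : (spanGraph (insert s(x, y) (T.erase s(a, b)))).Reachable x y := by
      apply Adj.reachable
      rw [span_adj]
      exact ⟨Finset.mem_insert_self _ _, hne⟩
    have hba : (spanGraph (insert s(x, y) (T.erase s(a, b)))).Reachable b a := by
      rcases hs x with h1 | h1 <;> rcases hs y with h2 | h2
      · exact absurd (h1.trans h2.symm) hxy
      · exact (h2.mono hle).symm.trans (hadj.symm.trans (h1.mono hle))
      · exact (h1.mono hle).symm.trans (hadj.trans (h2.mono hle))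
      · exact absurd (h1.trans h2.symm) hxy
    have hall : ∀ z, (spanGraph (insert s(x, y) (T.erase s(a, b)))).Reachable z a := by
      intro z
      rcases hs z with h | h
      · exact h.mono hle
      · exact (h.mono hle).trans hba
    have : Nonempty V := ⟨x⟩
    exact ⟨fun u v => (hall u).trans (hall v).symm⟩
  · have h1 : (spanGraph (T.erase f)).IsAcyclic := hT.2.2.anti (span_mono (Finset.erase_subset _ _))
    refine (h1.sup_edge_of_not_reachable hxy).anti ?_
    intro u v huv
    rw [span_adj, Finset.mem_insert] at huv
    rw [sup_adj, span_adj, edge_adj]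
    rcases huv with ⟨h | h, h'⟩
    · right
      rw [Sym2.eq_iff] at h
      tauto
    · exact Or.inl ⟨h, h'⟩

lemma weight_exchange [Fintype V] (G : SimpleGraph V) (w : G.edgeSet → ℝ) (T : Finset (Sym2 V))
    (f g : G.edgeSet) (hf : (f : Sym2 V) ∈ T) (hg : (g : Sym2 V) ∉ T) :
    treeWeight G w (insert (g : Sym2 V) (T.erase (f : Sym2 V))) = treeWeight G w T - w f + w g := by
  have key : ∀ e : G.edgeSet,
      (if (e : Sym2 V) ∈ insert (g : Sym2 V) (T.erase (f : Sym2 V)) then w e else 0)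
      = (if (e : Sym2 V) ∈ T then w e else 0) - (if e = f then w e else 0)
        + (if e = g then w e else 0) := by
    intro e
    by_cases h1 : e = f
    · have h2 : e ≠ g := by rintro rfl; subst h1; exact hg hf
      have h3 : (e : Sym2 V) ≠ g := fun h => h2 (Subtype.ext h)
      subst h1
      simp [h2, h3, hf]
    · have h3 : (e : Sym2 V) ≠ f := fun h => h1 (Subtype.ext h)
      by_cases h2 : e = g
      · subst h2
        simp [h1, hg]
      · have h4 : (e : Sym2 V) ≠ g := fun h => h2 (Subtype.ext h)
        simp [h1, h2, h3, h4]
  unfold treeWeight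
  rw [Finset.sum_congr rfl (fun e _ => key e), Finset.sum_add_distrib, Finset.sum_sub_distrib]
  simp

lemma eq_of_subset {G : SimpleGraph V} {S T : Finset (Sym2 V)} (hS : IsSpanningTree G S)
    (hT : IsSpanningTree G T) (h : S ⊆ T) : S = T := by
  refine Finset.Subset.antisymm h ?_
  intro e he
  induction e with
  | h a b =>
  by_contra hn
  refine not_reach hT he ((hS.2.1.preconnected a b).mono (span_mono ?_))
  intro e' he'
  refine Finset.mem_erase.2 ⟨?_, h he'⟩
  rintro rfl
  exact hn he'

/-- A spanning tree `T` of a finite connected graph `G` is the unique minimum-weight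
spanning tree for an injective weight function `w` if and only if for every tree edge `e`
and non-tree edge `e'` such that `e` lies on the unique path in `T` between the endpoints
of `e'`, one has `w e < w e'`. -/
theorem unique_mst_iff_cycle_condition [Fintype V] (G : SimpleGraph V) (hG : G.Connected)
    (w : G.edgeSet → ℝ) (hw : Function.Injective w)
    (T : Finset (Sym2 V)) (hT : IsSpanningTree G T) :
    (∀ T' : Finset (Sym2 V), IsSpanningTree G T' → T' ≠ T →
        treeWeight G w T < treeWeight G w T')
      ↔ ∀ e e' : G.edgeSet, (e : Sym2 V) ∈ T → (e' : Sym2 V) ∉ T →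
          OnTreePath T (e : Sym2 V) (e' : Sym2 V) → w e < w e' := by
  constructor
  · intro H e e' he he' hp
    obtain ⟨e', hG'⟩ := e'
    induction e' with
    | h x y =>
    have hnr : ¬ (spanGraph (T.erase (e : Sym2 V))).Reachable x y := by
      rintro hr
      obtain ⟨p, hpp⟩ := hr.exists_isPath
      have hle : spanGraph (T.erase (e : Sym2 V)) ≤ spanGraph T :=
        span_mono (Finset.erase_subset _ _)
      have h1 := hp x y (p.mapLe hle) (hpp.mapLe hle) rfl
      have h2 : (e : Sym2 V) ∈ p.edges := by simpa using h1
      have h3 := p.edges_subset_edgeSet h2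
      have h4 : (e : Sym2 V) ∈ T.erase (e : Sym2 V) := by
        generalize (e : Sym2 V) = d at *
        simp [spanGraph] at h3
        exact absurd h3.2 h3.1.2
      simp at h4
    have hex := exchange hT hG' hnr
    have hlt := H _ hex (by
      intro h
      apply he'
      rw [← h]
      exact Finset.mem_insert_self _ _)
    have := weight_exchange G w T e ⟨s(x, y), hG'⟩ he he'
    simp only at this
    linarith
  · intro H
    have main : ∀ n : ℕ, ∀ T' : Finset (Sym2 V), (T' \ T).card = n → IsSpanningTree G T' →
        T' ≠ T → treeWeight G w T < treeWeight G w T' := by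
      intro n
      induction n using Nat.strong_induction_on with
      | _ n ih =>
      intro T' hn hT' hne
      have hns : ¬ T' ⊆ T := fun h => hne (eq_of_subset hT' hT h)
      obtain ⟨e', he', heT⟩ := Finset.not_subset.1 hns
      have hG' : e' ∈ G.edgeSet := hT'.1 he'
      induction e' with
      | h u v =>
      have hnr := not_reach hT' he'
      obtain ⟨p, hpp⟩ := (hT.2.1.preconnected u v).exists_isPath
      obtain ⟨d, hd, hd1, hd2⟩ := p.exists_boundary_dart
        {z | (spanGraph (T'.erase s(u, v))).Reachable u z} (Reachable.refl _) hnr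
      obtain ⟨⟨x, y⟩, hadj⟩ := d
      simp only [Set.mem_setOf_eq] at hd1 hd2
      have heTT : s(x, y) ∈ T := (mem_iff_adj hT).2 hadj
      have hexG : s(x, y) ∈ G.edgeSet := hT.1 heTT
      have hep : s(x, y) ∈ p.edges := List.mem_map.2 ⟨_, hd, rfl⟩
      have hxy : ¬ (spanGraph (T'.erase s(u, v))).Reachable x y := fun h => hd2 (hd1.trans h)
      have hee : s(x, y) ≠ s(u, v) := fun h => heT (h ▸ heTT)
      have hxT' : s(x, y) ∉ T' := by
        intro h
        apply hxy
        apply Adj.reachable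
        rw [span_adj]
        exact ⟨Finset.mem_erase.2 ⟨hee, h⟩, G.ne_of_adj hexG⟩
      have hlt := H ⟨s(x, y), hexG⟩ ⟨s(u, v), hG'⟩ heTT heT (by
        intro a b q hq hab
        simp only [Sym2.eq_iff] at hab
        rcases hab with ⟨rfl, rfl⟩ | ⟨rfl, rfl⟩
        · have := hT.2.2.path_unique ⟨p, hpp⟩ ⟨q, hq⟩
          have h2 : p = q := congrArg Subtype.val this
          exact h2 ▸ hep
        · have := hT.2.2.path_unique ⟨p, hpp⟩ ⟨q.reverse, hq.reverse⟩
          have h2 : p = q.reverse := congrArg Subtype.val this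
          rw [h2] at hep
          simpa using hep)
      have hex := exchange hT' hexG hxy
      have hw' := weight_exchange G w T' ⟨s(u, v), hG'⟩ ⟨s(x, y), hexG⟩ he' hxT'
      simp only at hw'
      by_cases hq : insert s(x, y) (T'.erase s(u, v)) = T
      · rw [hq] at hw'
        linarith
      · have hcard : (insert s(x, y) (T'.erase s(u, v)) \ T).card < n := by
          rw [← hn]
          apply Finset.card_lt_card
          rw [Finset.ssubset_iff_of_subset]
          · exact ⟨s(u, v), by simp [he', heT], by simp [hee.symm]⟩
          · intro z hz
            rw [Finset.mem_sdiff, Finset.mem_insert, Finset.mem_erase] at hz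
            rw [Finset.mem_sdiff]
            rcases hz with ⟨rfl | h, h'⟩
            · exact absurd heTT h'
            · exact ⟨h.2, h'⟩
        have := ih _ hcard _ rfl hex hq
        linarith
    intro T' hT' hne
    exact main _ T' rfl hT' hne

end RST
end
end

section
/- Let G be a finite connected simple graph and let F be a spanning forest of G (an acyclic subgraph containing all vertices of G) with k ≥ 1 edges. Then P_Kru(F;G) = ∑_{e ∈ E(F)} P_Kru(F∖e;G) / |∂(F∖e)|, where F∖e is the forest obtained from F by deleting the edge e. -/
open MeasureTheory SimpleGraph
open scoped Classical

noncomputable section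

namespace RST

variable {V : Type*}

/-- The i.i.d. uniform-on-`[0,1]` product measure on weight vectors indexed by `E`. -/
def edgeUniform (E : Type*) [Fintype E] : Measure (E → ℝ) :=
  Measure.pi fun _ => (volume : Measure ℝ).restrict (Set.Icc (0 : ℝ) 1)

/-- `∂F`: the set of edges of `G` that are not in `F` and join two distinct connected
components of the spanning subgraph with edge set `F`. -/
def boundary (G : SimpleGraph V) (F : Finset (Sym2 V)) : Set (Sym2 V) :=
  {e | e ∈ G.edgeSet ∧ e ∉ F ∧ ∀ u v : V, e = s(u, v) → ¬(spanGraph F).Reachable u v}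

/-- `c` is the nested sequence of spanning forests produced by running Kruskal's algorithm
on `G` with the weights `w`: start from the empty forest and repeatedly add the
minimum-weight edge joining two distinct components. -/
def IsKruskalChain (G : SimpleGraph V) [Fintype V] (w : G.edgeSet → ℝ)
    (c : ℕ → Finset (Sym2 V)) : Prop :=
  c 0 = ∅ ∧ ∀ k : ℕ,
    ((boundary G (c k)).Nonempty →
      ∃ e : G.edgeSet, (e : Sym2 V) ∈ boundary G (c k) ∧
        (∀ e' : G.edgeSet, (e' : Sym2 V) ∈ boundary G (c k) → w e ≤ w e') ∧
        c (k + 1) = insert (e : Sym2 V) (c k)) ∧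
    (¬(boundary G (c k)).Nonempty → c (k + 1) = c k)

/-- `P_Kru(F; G)`: the probability, for i.i.d. uniform `[0,1]` weights, that `F` is the
forest produced after `|F|` steps of Kruskal's algorithm on `G`. -/
def kruProb (G : SimpleGraph V) [Fintype V] (F : Finset (Sym2 V)) : ℝ :=
  (edgeUniform G.edgeSet {w | ∃ c, IsKruskalChain G w c ∧ c F.card = F}).toReal

/-- `e` is a minimum-weight boundary edge of `H`. -/
def KMin [Fintype V] (G : SimpleGraph V) (w : G.edgeSet → ℝ) (H : Finset (Sym2 V))
    (e : G.edgeSet) : Prop :=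
  (e : Sym2 V) ∈ boundary G H ∧
    ∀ e' : G.edgeSet, (e' : Sym2 V) ∈ boundary G H → w e ≤ w e'

/-- Edge sets reachable by Kruskal's algorithm. -/
inductive KReach [Fintype V] (G : SimpleGraph V) (w : G.edgeSet → ℝ) :
    Finset (Sym2 V) → Prop
  | empty : KReach G w ∅
  | step (H : Finset (Sym2 V)) (e : G.edgeSet) (hH : KReach G w H) (he : KMin G w H e) :
      KReach G w (insert (e : Sym2 V) H)

lemma exists_kmin [Fintype V] (G : SimpleGraph V) (w : G.edgeSet → ℝ) (H : Finset (Sym2 V))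
    (h : (boundary G H).Nonempty) : ∃ e, KMin G w H e := by
  obtain ⟨x, hx⟩ := h
  have hne : (Finset.univ.filter fun e : G.edgeSet => (e : Sym2 V) ∈ boundary G H).Nonempty :=
    ⟨⟨x, hx.1⟩, by simpa using hx⟩
  obtain ⟨e, he, hmin⟩ := Finset.exists_min_image _ w hne
  refine ⟨e, by simpa using he, fun e' he' => hmin e' (by simpa using he')⟩

def kstep [Fintype V] (G : SimpleGraph V) (w : G.edgeSet → ℝ) (H : Finset (Sym2 V)) :
    Finset (Sym2 V) :=
  if h : (boundary G H).Nonempty then insert ((exists_kmin G w H h).choose : Sym2 V) H else H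

lemma kstep_spec [Fintype V] (G : SimpleGraph V) (w : G.edgeSet → ℝ) (H : Finset (Sym2 V)) :
    ((boundary G H).Nonempty →
      ∃ e : G.edgeSet, (e : Sym2 V) ∈ boundary G H ∧
        (∀ e' : G.edgeSet, (e' : Sym2 V) ∈ boundary G H → w e ≤ w e') ∧
        kstep G w H = insert (e : Sym2 V) H) ∧
    (¬(boundary G H).Nonempty → kstep G w H = H) := by
  constructor
  · intro h
    have := (exists_kmin G w H h).choose_spec
    exact ⟨_, this.1, this.2, by simp [kstep, h]⟩
  · intro h
    simp [kstep, h]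

lemma kreach_of_chain [Fintype V] (G : SimpleGraph V) (w : G.edgeSet → ℝ)
    (c : ℕ → Finset (Sym2 V)) (hc : IsKruskalChain G w c) (k : ℕ) : KReach G w (c k) := by
  induction k with
  | zero => rw [hc.1]; exact KReach.empty
  | succ k ih =>
    by_cases h : (boundary G (c k)).Nonempty
    · obtain ⟨e, h1, h2, h3⟩ := (hc.2 k).1 h
      rw [h3]
      exact KReach.step _ e ih ⟨h1, h2⟩
    · rw [(hc.2 k).2 h]; exact ih

lemma chain_of_kreach [Fintype V] (G : SimpleGraph V) (w : G.edgeSet → ℝ)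
    (F : Finset (Sym2 V)) (h : KReach G w F) : ∃ c, IsKruskalChain G w c ∧ c F.card = F := by
  induction h with
  | empty =>
    refine ⟨fun k => (kstep G w)^[k] ∅, ⟨rfl, fun k => ?_⟩, rfl⟩
    simp only [Function.iterate_succ_apply']
    exact kstep_spec G w _
  | step H e hH he ih =>
    obtain ⟨c, hc, hcH⟩ := ih
    have hcard : (insert (e : Sym2 V) H).card = H.card + 1 :=
      Finset.card_insert_of_notMem he.1.2.1
    refine ⟨fun k => if k ≤ H.card then c k
      else (kstep G w)^[k - H.card - 1] (insert (e : Sym2 V) H), ⟨by simp [hc.1], fun k => ?_⟩, ?_⟩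
    · rcases lt_trichotomy k H.card with hk | hk | hk
      · simp only [hk.le, if_true, Nat.succ_le_of_lt hk]
        exact hc.2 k
      · subst hk
        simp only [le_refl, if_true, hcH]
        have h1 : ¬ (H.card + 1 ≤ H.card) := by omega
        have h2 : H.card + 1 - H.card - 1 = 0 := by omega
        simp only [h1, if_false, h2, Function.iterate_zero, id]
        exact ⟨fun _ => ⟨e, he.1, he.2, rfl⟩, fun hn => absurd ⟨_, he.1⟩ hn⟩
      · have h1 : ¬ (k ≤ H.card) := by omega
        have h3 : ¬ (k + 1 ≤ H.card) := by omega
        have h2 : k + 1 - H.card - 1 = (k - H.card - 1) + 1 := by omega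
        simp only [h1, h3, if_false, h2, Function.iterate_succ_apply']
        exact kstep_spec G w _
    · simp [hcard]

lemma kruProb_eq [Fintype V] (G : SimpleGraph V) (F : Finset (Sym2 V)) :
    kruProb G F = (edgeUniform G.edgeSet).real {w | KReach G w F} := by
  unfold kruProb Measure.real
  congr 2
  ext w
  refine ⟨fun ⟨c, hc, h⟩ => ?_, fun h => chain_of_kreach G w F h⟩
  have := kreach_of_chain G w c hc F.card
  rwa [h] at this

lemma boundary_anti (G : SimpleGraph V) {H K : Finset (Sym2 V)} (h : H ⊆ K) :
    boundary G K ⊆ boundary G H := by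
  intro e he
  refine ⟨he.1, fun h' => he.2.1 (h h'), fun u v huv hr => he.2.2 u v huv (hr.mono ?_)⟩
  exact SimpleGraph.fromEdgeSet_mono (by exact_mod_cast h)

lemma kreach_swap [Fintype V] (G : SimpleGraph V) (w : G.edgeSet → ℝ) (a b : G.edgeSet)
    (H : Finset (Sym2 V)) (h : KReach G w H) (ha : (a : Sym2 V) ∈ boundary G H)
    (hb : (b : Sym2 V) ∈ boundary G H) : KReach G (w ∘ Equiv.swap a b) H := by
  induction h with
  | empty => exact KReach.empty
  | step H e hH he ih =>
    have ha' := boundary_anti G (Finset.subset_insert _ _) ha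
    have hb' := boundary_anti G (Finset.subset_insert _ _) hb
    refine KReach.step _ _ (ih ha' hb') ⟨he.1, fun e' he' => ?_⟩
    have hea : e ≠ a := by
      rintro rfl
      exact ha.2.1 (Finset.mem_insert_self _ _)
    have heb : e ≠ b := by
      rintro rfl
      exact hb.2.1 (Finset.mem_insert_self _ _)
    simp only [Function.comp, Equiv.swap_apply_of_ne_of_ne hea heb]
    apply he.2
    rw [Equiv.swap_apply_def]
    split_ifs <;> assumption

lemma kmin_swap [Fintype V] (G : SimpleGraph V) (w : G.edgeSet → ℝ) (a b : G.edgeSet)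
    (H : Finset (Sym2 V)) (h : KMin G w H a) 
    (hb : (b : Sym2 V) ∈ boundary G H) : KMin G (w ∘ Equiv.swap a b) H b := by
  refine ⟨hb, fun e' he' => ?_⟩
  simp only [Function.comp, Equiv.swap_apply_right]
  apply h.2
  have := h.1
  rw [Equiv.swap_apply_def]
  split_ifs <;> assumption

lemma kreach_iff [Fintype V] (G : SimpleGraph V) (w : G.edgeSet → ℝ) (F : Finset (Sym2 V))
    (hF : F.Nonempty) :
    KReach G w F ↔ ∃ e : G.edgeSet, (e : Sym2 V) ∈ F ∧ KReach G w (F.erase e) ∧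
      KMin G w (F.erase e) e := by
  constructor
  · intro h
    cases h with
    | empty => simp at hF
    | step H e hH he =>
      refine ⟨e, Finset.mem_insert_self _ _, ?_⟩
      rw [Finset.erase_insert he.1.2.1]
      exact ⟨hH, he⟩
  · rintro ⟨e, h1, h2, h3⟩
    have := KReach.step _ e h2 h3
    rwa [Finset.insert_erase h1] at this

lemma kreach_unique [Fintype V] (G : SimpleGraph V) (w : G.edgeSet → ℝ)
    (hw : Function.Injective w) (n : ℕ) : ∀ (H K : Finset (Sym2 V)), KReach G w H →
    KReach G w K → H.card = n → K.card = n → H = K := by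
  induction n with
  | zero =>
    intro H K _ _ h1 h2
    rw [Finset.card_eq_zero] at h1 h2
    rw [h1, h2]
  | succ n ih =>
    intro H K hH hK h1 h2
    obtain ⟨e, he, her, hem⟩ := (kreach_iff G w H (Finset.card_pos.1 (by omega))).1 hH
    obtain ⟨f, hf, hfr, hfm⟩ := (kreach_iff G w K (Finset.card_pos.1 (by omega))).1 hK
    have hEq := ih _ _ her hfr (by rw [Finset.card_erase_of_mem he]; omega)
      (by rw [Finset.card_erase_of_mem hf]; omega)
    have hef : e = f := by
      apply hw
      apply le_antisymm
      · exact hem.2 f (by rw [hEq]; exact hfm.1)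
      · exact hfm.2 e (by rw [← hEq]; exact hem.1)
    rw [← Finset.insert_erase he, ← Finset.insert_erase hf, hEq, hef]

lemma measurable_kmin [Fintype V] (G : SimpleGraph V) (H : Finset (Sym2 V)) (e : G.edgeSet) :
    MeasurableSet {w | KMin G w H e} := by
  have : {w | KMin G w H e} = {_w : G.edgeSet → ℝ | (e : Sym2 V) ∈ boundary G H} ∩
      ⋂ e' : G.edgeSet, ⋂ _ : (e' : Sym2 V) ∈ boundary G H, {w | w e ≤ w e'} := by
    ext w
    simp [KMin]
  rw [this]
  apply MeasurableSet.inter (MeasurableSet.const _)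
  refine MeasurableSet.iInter fun e' => MeasurableSet.iInter fun _ => ?_
  exact measurableSet_le (measurable_pi_apply _) (measurable_pi_apply _)

lemma measurable_kreach [Fintype V] (G : SimpleGraph V) (n : ℕ) :
    ∀ H : Finset (Sym2 V), H.card = n → MeasurableSet {w | KReach G w H} := by
  induction n with
  | zero =>
    intro H h
    rw [Finset.card_eq_zero] at h
    subst h
    simp [KReach.empty]
  | succ n ih =>
    intro H h
    simp only [kreach_iff G _ H (Finset.card_pos.1 (by omega)), Set.ofPred_exists]
    refine MeasurableSet.iUnion fun e => ?_
    by_cases he : (e : Sym2 V) ∈ H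
    · simp only [he, true_and]
      exact (ih _ (by rw [Finset.card_erase_of_mem he]; omega)).inter (measurable_kmin G _ e)
    · simp [he]

/-- The event that `H` is reached and `e` is the next edge. -/
def KEv [Fintype V] (G : SimpleGraph V) (H : Finset (Sym2 V)) (e : G.edgeSet) :
    Set (G.edgeSet → ℝ) := {w | KReach G w H ∧ KMin G w H e}

lemma measurable_kev [Fintype V] (G : SimpleGraph V) (H : Finset (Sym2 V)) (e : G.edgeSet) :
    MeasurableSet (KEv G H e) :=
  (measurable_kreach G _ H rfl).inter (measurable_kmin G H e)

instance (E : Type*) [Fintype E] : IsFiniteMeasure (edgeUniform E) := by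
  unfold edgeUniform; infer_instance

lemma edgeUniform_swap (E : Type*) [Fintype E] [DecidableEq E] (a b : E) (s : Set (E → ℝ)) :
    (edgeUniform E) {w | w ∘ Equiv.swap a b ∈ s} = edgeUniform E s := by
  have h := measurePreserving_piCongrLeft
    (fun _ : E => (volume : Measure ℝ).restrict (Set.Icc (0 : ℝ) 1)) (Equiv.swap a b)
  have h2 := h.measure_preimage_equiv s
  unfold edgeUniform
  rw [← h2]
  congr 1
  ext w
  simp only [Set.mem_preimage, Set.mem_ofPred_eq]
  have : (MeasurableEquiv.piCongrLeft (fun _ : E => ℝ) (Equiv.swap a b)) w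
      = w ∘ Equiv.swap a b := by
    ext i
    have := Equiv.piCongrLeft_apply_apply (fun _ : E => ℝ) (Equiv.swap a b) w (Equiv.swap a b i)
    rw [Equiv.swap_apply_self] at this
    exact this
  rw [this]

lemma edgeUniform_tie (E : Type*) [Fintype E] (a b : E) (hab : a ≠ b) :
    (edgeUniform E) {w | w a = w b} = 0 := by
  have hac : edgeUniform E ≪ (volume : Measure (E → ℝ)) := by
    unfold edgeUniform
    rw [← Measure.restrict_pi_pi]
    exact Measure.restrict_le_self.absolutelyContinuous
  apply hac
  let L : (E → ℝ) →ₗ[ℝ] ℝ := 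
    LinearMap.proj (R := ℝ) (φ := fun _ : E => ℝ) a -
      LinearMap.proj (R := ℝ) (φ := fun _ : E => ℝ) b
  have : {w : E → ℝ | w a = w b} = (LinearMap.ker L : Set (E → ℝ)) := by
    ext w
    simp [L, sub_eq_zero]
  rw [this]
  apply Measure.addHaar_submodule
  intro h
  have h1 : Pi.single a (1 : ℝ) ∈ LinearMap.ker L := by rw [h]; trivial
  simp [L, Pi.single_apply, hab.symm] at h1

lemma edgeUniform_inj (E : Type*) [Fintype E] :
    ∀ᵐ w ∂(edgeUniform E), Function.Injective w := by
  have : ∀ᵐ w ∂(edgeUniform E), ∀ a b : E, a ≠ b → w a ≠ w b := by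
    rw [ae_all_iff]; intro a
    rw [ae_all_iff]; intro b
    by_cases hab : a = b
    · simp [hab]
    · rw [ae_iff]
      simpa [hab] using edgeUniform_tie E a b hab
  filter_upwards [this] with w hw a b h
  by_contra hn
  exact hw a b hn h

lemma kev_eq [Fintype V] (G : SimpleGraph V) (H : Finset (Sym2 V)) (a b : G.edgeSet)
    (ha : (a : Sym2 V) ∈ boundary G H) (hb : (b : Sym2 V) ∈ boundary G H) :
    (edgeUniform G.edgeSet).real (KEv G H a) = (edgeUniform G.edgeSet).real (KEv G H b) := by
  unfold Measure.real
  congr 1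
  rw [← edgeUniform_swap _ a b (KEv G H b)]
  congr 1
  ext w
  constructor
  · rintro ⟨h1, h2⟩
    exact ⟨kreach_swap G w a b H h1 ha hb, kmin_swap G w a b H h2 hb⟩
  · rintro ⟨h1, h2⟩
    have h3 := kreach_swap G _ b a H h1 hb ha
    have h4 := kmin_swap G _ b a H h2 ha
    have : (w ∘ Equiv.swap a b) ∘ Equiv.swap b a = w := by
      ext i; simp [Equiv.swap_comm b a]
    rw [this] at h3 h4
    exact ⟨h3, h4⟩

lemma kreach_prob [Fintype V] (G : SimpleGraph V) (H : Finset (Sym2 V)) (a : G.edgeSet)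
    (ha : (a : Sym2 V) ∈ boundary G H) :
    kruProb G H = (boundary G H).ncard * (edgeUniform G.edgeSet).real (KEv G H a) := by
  rw [kruProb_eq]
  let S := Finset.univ.filter fun e : G.edgeSet => (e : Sym2 V) ∈ boundary G H
  have hS : S.card = (boundary G H).ncard := by
    have : boundary G H = ↑(S.map (Function.Embedding.subtype _)) := by
      ext x
      simp only [S, Finset.coe_map, Finset.coe_filter, Finset.mem_univ, true_and]
      constructor
      · intro hx
        exact ⟨⟨x, hx.1⟩, hx, rfl⟩
      · rintro ⟨y, hy, rfl⟩
        exact hy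
    rw [this, Set.ncard_coe_finset, Finset.card_map]
  have hU : {w | KReach G w H} = ⋃ e ∈ S, KEv G H e := by
    ext w
    simp only [Set.mem_ofPred_eq, Set.mem_iUnion, KEv]
    constructor
    · intro h
      obtain ⟨e, he⟩ := exists_kmin G w H ⟨_, ha⟩
      exact ⟨e, by simpa [S] using he.1, h, he⟩
    · rintro ⟨e, _, h, _⟩
      exact h
  rw [hU, measureReal_biUnion_finset₀]
  · rw [Finset.sum_congr rfl (g := fun _ => (edgeUniform G.edgeSet).real (KEv G H a)),
      Finset.sum_const, hS, nsmul_eq_mul]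
    intro e he
    exact kev_eq G H e a (by simpa [S] using he) ha
  · intro e he f hf hef
    refine measure_mono_null ?_ (edgeUniform_tie _ e f hef)
    rintro w ⟨⟨_, h1⟩, ⟨_, h2⟩⟩
    exact le_antisymm (h1.2 f h2.1) (h2.2 e h1.1)
  · intro e _
    exact (measurable_kev G H e).nullMeasurableSet

lemma mem_boundary_erase (G : SimpleGraph V) (F : Finset (Sym2 V)) (hFsub : ↑F ⊆ G.edgeSet)
    (hFforest : (spanGraph F).IsAcyclic) (e : Sym2 V) (he : e ∈ F) :
    e ∈ boundary G (F.erase e) := by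
  refine ⟨hFsub he, Finset.notMem_erase _ _, ?_⟩
  rintro u v rfl hr
  have hadj : (spanGraph F).Adj u v := by
    have : G.Adj u v := hFsub he
    simp [spanGraph, he, this.ne]
  have hb := (SimpleGraph.isAcyclic_iff_forall_adj_isBridge.1 hFforest) hadj
  rw [SimpleGraph.isBridge_iff] at hb
  apply hb
  refine hr.mono ?_
  intro x y hxy
  simp only [spanGraph, SimpleGraph.fromEdgeSet_adj, Finset.coe_erase] at hxy
  simp [spanGraph, SimpleGraph.deleteEdges_adj] at hxy ⊢
  tauto

/-- Kruskal induction: for a spanning forest `F` of a finite connected graph `G` with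
at least one edge, `P_Kru(F) = ∑_{e ∈ F} P_Kru(F \ e) / |∂(F \ e)|`. -/
theorem kruskal_induction [Fintype V] (G : SimpleGraph V) (hG : G.Connected)
    (F : Finset (Sym2 V)) (hFsub : ↑F ⊆ G.edgeSet) (hFforest : (spanGraph F).IsAcyclic)
    (hk : 1 ≤ F.card) :
    kruProb G F = ∑ e ∈ F, kruProb G (F.erase e) / ((boundary G (F.erase e)).ncard : ℝ) := by
  have hb := mem_boundary_erase G F hFsub hFforest
  have hterm : ∀ x ∈ F.attach, (edgeUniform G.edgeSet).real
      (KEv G (F.erase x.1) ⟨x.1, hFsub x.2⟩) =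
      kruProb G (F.erase x.1) / ((boundary G (F.erase x.1)).ncard : ℝ) := by
    intro x _
    have hx := hb x.1 x.2
    rw [kreach_prob G (F.erase x.1) ⟨x.1, hFsub x.2⟩ hx, mul_div_cancel_left₀]
    have : (boundary G (F.erase x.1)).ncard ≠ 0 :=
      Set.ncard_ne_zero_of_mem hx (Set.toFinite _)
    exact_mod_cast this
  rw [← Finset.sum_attach, ← Finset.sum_congr rfl hterm, kruProb_eq]
  have hU : {w | KReach G w F} =
      ⋃ x ∈ F.attach, KEv G (F.erase x.1) ⟨x.1, hFsub x.2⟩ := by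
    ext w
    simp only [Set.mem_ofPred_eq, Set.mem_iUnion, KEv,
      kreach_iff G w F (Finset.card_pos.1 hk)]
    constructor
    · rintro ⟨e, h1, h2, h3⟩
      exact ⟨⟨e, h1⟩, Finset.mem_attach _ _, h2, h3⟩
    · rintro ⟨x, _, h2, h3⟩
      exact ⟨⟨x.1, hFsub x.2⟩, x.2, h2, h3⟩
  rw [hU, measureReal_biUnion_finset₀]
  · intro x _ y _ hxy
    have hinj := edgeUniform_inj G.edgeSet
    rw [ae_iff] at hinj
    refine measure_mono_null ?_ hinj
    rintro w ⟨⟨h1, _⟩, ⟨h2, _⟩⟩ hw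
    apply hxy
    have := kreach_unique G w hw (F.card - 1) _ _ h1 h2
      (Finset.card_erase_of_mem x.2) (Finset.card_erase_of_mem y.2)
    apply Subtype.ext
    by_contra hne
    have hm : x.1 ∈ F.erase y.1 := Finset.mem_erase.2 ⟨hne, x.2⟩
    rw [← this] at hm
    exact Finset.notMem_erase _ _ hm
  · intro x _
    exact (measurable_kev G _ _).nullMeasurableSet

end RST
end
end

section
/- Let G be a finite connected simple graph with n vertices and m edges, let T be a spanning tree of G, and let π = (e_1, …, e_{m−n+1}) be an ordering (bijection) of the edges of E(G) ∖ E(T). For e ∉ T let C_e be the edge set consisting of e together with the edges of the unique path in T between the endpoints of e, and let D_j = ⋃_{i=1}^{j} C_{e_i}. Let P_MST(T, π) be the μ_G-probability that T is the unique minimum-weight spanning tree and simultaneously w(e_1) < w(e_2) < ⋯ < w(e_{m−n+1}). Then P_MST(T, π) = ∏_{j=1}^{m−n+1} 1/|D_j|; consequently P_MST(T;G) = ∑_π ∏_{j=1}^{m−n+1} 1/|D_j(π)|, where the sum is over all orderings π of E(G)∖E(T). -/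
open MeasureTheory SimpleGraph
open scoped Classical

noncomputable section

namespace RST

variable {V : Type*}

/-- The event that `T` is the unique minimum-weight spanning tree of `G`. -/
def mstEvent (G : SimpleGraph V) [Fintype V] (T : Finset (Sym2 V)) : Set (G.edgeSet → ℝ) :=
  {w | IsSpanningTree G T ∧ ∀ T' : Finset (Sym2 V), IsSpanningTree G T' → T' ≠ T →
    treeWeight G w T < treeWeight G w T'}

/-- `P_MST(T; G)`: probability that `T` is the unique minimum-weight spanning tree. -/
def mstProb (G : SimpleGraph V) [Fintype V] (T : Finset (Sym2 V)) : ℝ :=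
  (edgeUniform G.edgeSet (mstEvent G T)).toReal

/-- The broken cycle `C_e` of `e ∉ T`: `e` together with the edges of the unique path
in the tree `T` between the two endpoints of `e`. -/
def brokenCycle (T : Finset (Sym2 V)) (e : Sym2 V) : Set (Sym2 V) :=
  insert e {f | ∀ (u v : V) (p : (spanGraph T).Walk u v), p.IsPath → e = s(u, v) →
    f ∈ p.edges}

/-- The event that the weights of the edges `π 0, π 1, …` occur in increasing order. -/
def orderEvent (G : SimpleGraph V) [Fintype V] {k : ℕ} (π : Fin k → Sym2 V) :
    Set (G.edgeSet → ℝ) :=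
  {w | ∀ (i j : Fin k) (e e' : G.edgeSet), i < j → (e : Sym2 V) = π i →
    (e' : Sym2 V) = π j → w e < w e'}

instance nuProb : IsProbabilityMeasure ((volume : Measure ℝ).restrict (Set.Icc (0 : ℝ) 1)) :=
  ⟨by simp⟩

instance edgeUniformProb (E : Type*) [Fintype E] : IsProbabilityMeasure (edgeUniform E) := by
  unfold edgeUniform; infer_instance

section prob
set_option linter.unusedSectionVars false
variable {E : Type*} [Fintype E]

lemma measurable_upd (e : E) :
    Measurable (fun p : ℝ × (E → ℝ) => Function.update p.2 e p.1) := by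
  rw [measurable_pi_iff]
  intro i
  by_cases h : i = e
  · subst h; simpa using measurable_fst
  · simp only [Function.update_of_ne h]; exact (measurable_pi_apply i).comp measurable_snd

lemma map_upd (e : E) :
    Measure.map (fun p : ℝ × (E → ℝ) => Function.update p.2 e p.1)
      (((volume : Measure ℝ).restrict (Set.Icc (0 : ℝ) 1)).prod (edgeUniform E))
      = edgeUniform E := by
  symm
  refine Measure.pi_eq ?_
  intro s hs
  rw [Measure.map_apply (measurable_upd e) (MeasurableSet.univ_pi hs)]
  have : (fun p : ℝ × (E → ℝ) => Function.update p.2 e p.1) ⁻¹' (Set.univ.pi s)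
      = s e ×ˢ (Set.univ.pi (Function.update s e Set.univ)) := by
    ext ⟨x, w⟩
    simp only [Set.mem_preimage, Set.mem_pi, Set.mem_univ, true_imp_iff, Set.mem_prod]
    constructor
    · intro h
      refine ⟨by simpa using h e, fun i => ?_⟩
      by_cases hi : i = e
      · subst hi; simp
      · simpa [hi] using h i
    · rintro ⟨h1, h2⟩ i
      by_cases hi : i = e
      · subst hi; simpa using h1
      · simpa [hi] using h2 i
  rw [this, Measure.prod_prod]
  unfold edgeUniform
  rw [Measure.pi_pi]
  rw [← Finset.mul_prod_erase Finset.univ _ (Finset.mem_univ e),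
    ← Finset.mul_prod_erase Finset.univ _ (Finset.mem_univ e)]
  simp only [Function.update_self, measure_univ, one_mul]
  congr 1
  refine Finset.prod_congr rfl fun i hi => ?_
  rw [Function.update_of_ne (Finset.ne_of_mem_erase hi)]

lemma measure_split (e : E) {S : Set (E → ℝ)} (hS : MeasurableSet S) :
    edgeUniform E S = ∫⁻ x in Set.Icc (0:ℝ) 1, edgeUniform E {w | Function.update w e x ∈ S} := by
  conv_lhs => rw [← map_upd e]
  rw [Measure.map_apply (measurable_upd e) hS,
    Measure.prod_apply (measurable_upd e hS)]
  rfl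

structure Good (A : Set (E → ℝ)) (D : Finset E) (c : ℝ) : Prop where
  meas : MeasurableSet A
  indep : ∀ (w : E → ℝ) (e : E) (x : ℝ), e ∉ D → (Function.update w e x ∈ A ↔ w ∈ A)
  nonneg : 0 ≤ c
  eq : ∀ t : ℝ, 0 ≤ t → t ≤ 1 →
    edgeUniform E (A ∩ {w | ∀ f ∈ D, w f < t}) = ENNReal.ofReal (t ^ D.card * c)

lemma meas_lt (D : Finset E) (t : ℝ) : MeasurableSet {w : E → ℝ | ∀ f ∈ D, w f < t} := by
  have : {w : E → ℝ | ∀ f ∈ D, w f < t} = ⋂ f ∈ D, {w | w f < t} := by ext; simp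
  rw [this]
  exact Finset.measurableSet_biInter _ fun f _ =>
    measurableSet_lt (measurable_pi_apply f) measurable_const

lemma meas_lt' (D : Finset E) (e : E) : MeasurableSet {w : E → ℝ | ∀ f ∈ D, w f < w e} := by
  have : {w : E → ℝ | ∀ f ∈ D, w f < w e} = ⋂ f ∈ D, {w | w f < w e} := by ext; simp
  rw [this]
  exact Finset.measurableSet_biInter _ fun f _ =>
    measurableSet_lt (measurable_pi_apply f) (measurable_pi_apply e)

lemma upd_forall (w : E → ℝ) {D : Finset E} {e : E} (he : e ∉ D) (x t : ℝ) :
    (∀ f ∈ D, Function.update w e x f < t) ↔ ∀ f ∈ D, w f < t := by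
  refine forall₂_congr fun f hf => ?_
  rw [Function.update_of_ne (ne_of_mem_of_not_mem hf he)]

lemma good_univ : Good (Set.univ : Set (E → ℝ)) ∅ 1 where
  meas := MeasurableSet.univ
  indep := by simp
  nonneg := zero_le_one
  eq := by intro t _ _; simp

lemma restrict_Iio (t : ℝ) (ht1 : t ≤ 1) (g : ℝ → ENNReal) :
    ∫⁻ x in Set.Icc (0:ℝ) 1, (if x < t then g x else 0) = ∫⁻ x in Set.Ico 0 t, g x := by
  have : (fun x => if x < t then g x else 0) = (Set.Iio t).indicator g := by
    ext x; simp [Set.indicator]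
  rw [this, lintegral_indicator measurableSet_Iio, Measure.restrict_restrict measurableSet_Iio]
  congr 2
  ext x; simp only [Set.mem_inter_iff, Set.mem_Iio, Set.mem_Icc, Set.mem_Ico]
  constructor
  · rintro ⟨a, b, c⟩; exact ⟨b, a⟩
  · rintro ⟨a, b⟩; exact ⟨b, a, by linarith⟩

lemma Good.insert {A : Set (E → ℝ)} {D : Finset E} {c : ℝ} (h : Good A D c) {e : E}
    (he : e ∉ D) : Good A (insert e D) c where
  meas := h.meas
  indep := fun w f x hf => h.indep w f x (fun h' => hf (Finset.mem_insert_of_mem h'))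
  nonneg := h.nonneg
  eq := by
    intro t ht0 ht1
    rw [measure_split e (h.meas.inter (meas_lt _ t))]
    have key : ∀ x : ℝ, edgeUniform E {w | Function.update w e x ∈
        A ∩ {w | ∀ f ∈ Insert.insert e D, w f < t}}
        = if x < t then ENNReal.ofReal (t ^ D.card * c) else 0 := by
      intro x
      split_ifs with hx
      · rw [← h.eq t ht0 ht1]
        congr 1
        ext w
        simp only [Set.mem_ofPred_eq, Set.mem_inter_iff, h.indep w e x he, Finset.forall_mem_insert,
          Function.update_self, upd_forall w he, hx, true_and]
      · convert measure_empty (μ := edgeUniform E)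
        ext w
        simp [hx]
    simp_rw [key]
    rw [restrict_Iio t ht1, lintegral_const, Measure.restrict_apply MeasurableSet.univ,
      Set.univ_inter, Real.volume_Ico, ← ENNReal.ofReal_mul
        (mul_nonneg (pow_nonneg ht0 _) h.nonneg), Finset.card_insert_of_notMem he]
    congr 1; ring

lemma Good.mono {A : Set (E → ℝ)} {D D' : Finset E} {c : ℝ} (h : Good A D c)
    (hD : D ⊆ D') : Good A D' c := by
  have : ∀ N : Finset E, Disjoint D N → Good A (N ∪ D) c := by
    intro N
    induction N using Finset.induction_on with
    | empty => intro _; simpa using h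
    | insert a s ha ih =>
      intro hd
      rw [Finset.disjoint_insert_right] at hd
      rw [Finset.insert_union]
      exact (ih hd.2).insert (by simp [ha, hd.1])
  have h2 := this (D' \ D) Finset.disjoint_sdiff
  rwa [Finset.sdiff_union_of_subset hD] at h2

lemma Good.max {A : Set (E → ℝ)} {D : Finset E} {c : ℝ} (h : Good A D c) {e : E}
    (he : e ∉ D) :
    Good (A ∩ {w | ∀ f ∈ D, w f < w e}) (Insert.insert e D) (c * (1 / ((D.card + 1 : ℕ) : ℝ))) where
  meas := h.meas.inter (meas_lt' _ _)
  indep := by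
    intro w f x hf
    rw [Finset.mem_insert, not_or] at hf
    simp only [Set.mem_inter_iff, Set.mem_ofPred_eq, h.indep w f x hf.2,
      Function.update_of_ne (Ne.symm hf.1), upd_forall w hf.2]
  nonneg := mul_nonneg h.nonneg (by positivity)
  eq := by
    intro t ht0 ht1
    rw [measure_split e ((h.meas.inter (meas_lt' _ _)).inter (meas_lt _ t))]
    have key : ∀ x ∈ Set.Icc (0:ℝ) 1, edgeUniform E {w | Function.update w e x ∈
        A ∩ {w | ∀ f ∈ D, w f < w e} ∩ {w | ∀ f ∈ Insert.insert e D, w f < t}}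
        = if x < t then ENNReal.ofReal (x ^ D.card * c) else 0 := by
      intro x hx01
      split_ifs with hx
      · rw [← h.eq x hx01.1 hx01.2]
        congr 1
        ext w
        simp only [Set.mem_ofPred_eq, Set.mem_inter_iff, h.indep w e x he, Finset.forall_mem_insert,
          Function.update_self, upd_forall w he, hx, true_and]
        constructor
        · rintro ⟨a, b⟩; exact a
        · rintro ⟨a, b⟩; exact ⟨⟨a, b⟩, fun f hf => (b f hf).trans hx⟩
      · convert measure_empty (μ := edgeUniform E)
        ext w
        simp [hx]
    rw [setLIntegral_congr_fun measurableSet_Icc key]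
    rw [restrict_Iio t ht1, ← ofReal_integral_eq_lintegral_ofReal]
    · rw [integral_Ico_eq_integral_Ioc, ← intervalIntegral.integral_of_le ht0,
        intervalIntegral.integral_mul_const, integral_pow, Finset.card_insert_of_notMem he]
      congr 1
      simp
      ring
    · have : Continuous fun x : ℝ => x ^ D.card * c := by fun_prop
      exact (this.integrableOn_Icc (a := 0) (b := t)).mono_set Set.Ico_subset_Icc_self
    · refine (ae_restrict_iff' measurableSet_Ico).2 (Filter.Eventually.of_forall fun x hx => ?_)
      exact mul_nonneg (pow_nonneg hx.1 _) h.nonneg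

lemma map_eval (e : E) : Measure.map (fun w : E → ℝ => w e) (edgeUniform E)
    = (volume : Measure ℝ).restrict (Set.Icc (0 : ℝ) 1) :=
  (measurePreserving_eval (fun _ : E => (volume : Measure ℝ).restrict (Set.Icc (0 : ℝ) 1)) e).map_eq

lemma ae_ne_const (e : E) (x : ℝ) : edgeUniform E {w | w e = x} = 0 := by
  have : {w : E → ℝ | w e = x} = (fun w => w e) ⁻¹' {x} := by ext; simp
  rw [this, ← Measure.map_apply (measurable_pi_apply e) (measurableSet_singleton x), map_eval]
  exact measure_singleton x

lemma ae_lt_one (e : E) : ∀ᵐ w ∂(edgeUniform E), w e < 1 := by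
  have : {w : E → ℝ | ¬ w e < 1} = (fun w => w e) ⁻¹' (Set.Ici 1) := by ext; simp
  rw [ae_iff, this, ← Measure.map_apply (measurable_pi_apply e) measurableSet_Ici, map_eval,
    Measure.restrict_apply measurableSet_Ici]
  refine measure_mono_null (t := {1}) ?_ (measure_singleton _)
  rintro x ⟨h1, h2⟩
  exact le_antisymm h2.2 h1

lemma ae_inj : ∀ᵐ w ∂(edgeUniform E), Function.Injective w := by
  have : ∀ᵐ w ∂(edgeUniform E), ∀ p : E × E, p.1 ≠ p.2 → w p.1 ≠ w p.2 := by
    rw [ae_all_iff]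
    rintro ⟨e, f⟩
    by_cases hef : e = f
    · simp [hef]
    · rw [ae_iff]
      simp only [ne_eq, hef, not_false_eq_true, true_imp_iff, not_not]
      rw [measure_split e (measurableSet_eq_fun (measurable_pi_apply e) (measurable_pi_apply f))]
      have : ∀ x : ℝ, edgeUniform E {w | Function.update w e x ∈ {w | w e = w f}} = 0 := by
        intro x
        rw [← ae_ne_const f x]
        congr 1; ext w
        simp [Function.update_of_ne (Ne.symm hef), eq_comm]
      rw [lintegral_congr this, lintegral_zero]
  filter_upwards [this] with w hw a b hab
  by_contra h
  exact hw (a, b) h hab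

lemma Good.measure {A : Set (E → ℝ)} {D : Finset E} {c : ℝ} (h : Good A D c) :
    (edgeUniform E A).toReal = c := by
  have h1 := h.eq 1 zero_le_one le_rfl
  have h2 : edgeUniform E (A ∩ {w | ∀ f ∈ D, w f < 1}) = edgeUniform E A := by
    refine measure_congr ?_
    have : ∀ᵐ w ∂(edgeUniform E), ∀ f : E, w f < 1 := ae_all_iff.2 ae_lt_one
    filter_upwards [this] with w hw
    refine propext ?_
    exact ⟨fun h => h.1, fun h => ⟨h, fun f _ => hw f⟩⟩
  rw [← h2, h1]
  simp [h.nonneg]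

/-- The chain of unions. -/
lemma chain_measure {k : ℕ} (D : ℕ → Finset E) (hD0 : D 0 = ∅) (hD : Monotone D)
    (e : Fin k → E) (he : ∀ j : Fin k, e j ∈ D (j + 1)) (he' : ∀ j : Fin k, e j ∉ D j) :
    (edgeUniform E {w | ∀ j : Fin k, ∀ f ∈ D (j + 1), f ≠ e j → w f < w (e j)}).toReal
      = ∏ j : Fin k, 1 / ((D (j + 1)).card : ℝ) := by
  have main : ∀ n ≤ k, Good {w | ∀ j : Fin k, j.1 < n → ∀ f ∈ D (j + 1), f ≠ e j → w f < w (e j)}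
      (D n) (∏ j ∈ Finset.range n, 1 / ((D (j + 1)).card : ℝ)) := by
    intro n
    induction n with
    | zero => intro _; simpa [hD0] using good_univ (E := E)
    | succ n ih =>
      intro hn
      have g := ih (by omega)
      set j : Fin k := ⟨n, by omega⟩ with hj
      have hej := he j
      have hej' := he' j
      have hsub : D n ⊆ (D (n+1)).erase (e j) := by
        intro x hx
        refine Finset.mem_erase.2 ⟨?_, hD (Nat.le_succ n) hx⟩
        rintro rfl
        exact hej' hx
      have g2 := (g.mono hsub).max (Finset.notMem_erase _ _)
      rw [Finset.insert_erase hej, Finset.card_erase_add_one hej] at g2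
      rw [Finset.prod_range_succ]
      convert g2 using 1
      ext w
      simp only [Set.mem_ofPred_eq, Set.mem_inter_iff]
      constructor
      · intro h
        refine ⟨fun i hi => h i (by omega), fun f hf => ?_⟩
        rw [Finset.mem_erase] at hf
        exact h j (by simp [hj]) f hf.2 hf.1
      · rintro ⟨h1, h2⟩ i hi f hf hfe
        rcases Nat.lt_succ_iff_lt_or_eq.1 hi with h | h
        · exact h1 i h f hf hfe
        · have : i = j := Fin.ext h
          subst this
          exact h2 f (Finset.mem_erase.2 ⟨hfe, hf⟩)
  have g := (main k le_rfl).measure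
  rw [Finset.prod_range] at g
  rw [← g]
  congr 2
  ext w
  exact ⟨fun h j _ => h j, fun h j => h j j.2⟩

end prob

section graph

lemma edgeSet_spanGraph {G : SimpleGraph V} {T : Finset (Sym2 V)} (hT : ↑T ⊆ G.edgeSet) :
    (spanGraph T).edgeSet = ↑T := by
  unfold spanGraph
  rw [edgeSet_fromEdgeSet]
  ext e
  simp only [Set.mem_sdiff, Finset.mem_coe, and_iff_left_iff_imp]
  intro he hd
  exact G.not_isDiag_of_mem_edgeSet (hT he) hd

lemma spanningTree_iff [Fintype V] {G : SimpleGraph V} {T : Finset (Sym2 V)} :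
    IsSpanningTree G T ↔ ↑T ⊆ G.edgeSet ∧ (spanGraph T).Connected ∧ T.card + 1 = Nat.card V := by
  unfold IsSpanningTree
  refine and_congr_right fun h => ?_
  have h1 := isTree_iff_connected_and_card (G := spanGraph T)
  have h2 := SimpleGraph.isTree_iff (G := spanGraph T)
  rw [← h2, h1, edgeSet_spanGraph h]
  simp

lemma swap_spanning [Fintype V] {G : SimpleGraph V} {T : Finset (Sym2 V)} (hT : IsSpanningTree G T)
    {a b : V} (he : s(a, b) ∈ G.edgeSet) (heT : s(a, b) ∉ T) (p : (spanGraph T).Walk b a)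
    (hp : p.IsPath) {f : Sym2 V} (hf : f ∈ p.edges) :
    IsSpanningTree G (insert s(a, b) (T.erase f)) := by
  have hfT : f ∈ T := by
    have := p.edges_subset_edgeSet hf
    rwa [edgeSet_spanGraph hT.1] at this
  have hne : s(a, b) ≠ f := fun h => heT (h ▸ hfT)
  have hsub : (↑(insert s(a, b) T : Finset (Sym2 V)) : Set (Sym2 V)) ⊆ G.edgeSet := by
    intro x hx
    simp only [Finset.coe_insert, Set.mem_insert_iff, Finset.mem_coe] at hx
    rcases hx with rfl | hx
    · exact he
    · exact hT.1 hx
  rw [spanningTree_iff]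
  refine ⟨?_, ?_, ?_⟩
  · refine subset_trans ?_ hsub
    exact_mod_cast Finset.insert_subset_insert _ (Finset.erase_subset _ _)
  · have hle : spanGraph T ≤ spanGraph (insert s(a, b) T) :=
      fromEdgeSet_mono (by simp)
    have hadj : (spanGraph (insert s(a, b) T)).Adj a b := by
      rw [← mem_edgeSet, edgeSet_spanGraph hsub]; simp
    have hconn : (spanGraph (insert s(a, b) T)).Connected := hT.2.1.mono hle
    have hcyc : (Walk.cons hadj (p.mapLe hle)).IsCycle := by
      rw [Walk.cons_isCycle_iff]
      refine ⟨hp.mapLe hle, ?_⟩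
      rw [Walk.edges_mapLe_eq_edges]
      intro h
      have := p.edges_subset_edgeSet h
      rw [edgeSet_spanGraph hT.1] at this
      exact heT this
    have hnb : ¬ (spanGraph (insert s(a, b) T)).IsBridge f := by
      intro h
      refine h.notMem_edges_of_isCycle hcyc ?_
      rw [Walk.edges_cons, Walk.edges_mapLe_eq_edges]
      exact List.mem_cons_of_mem _ hf
    have hdel : ((spanGraph (insert s(a, b) T)).deleteEdges {f}).Connected := by
      induction f with
      | h x y => exact hconn.connected_delete_edge_of_not_isBridge hnb
    refine hdel.mono ?_
    intro x y hxy
    rw [deleteEdges_adj] at hxy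
    rw [← mem_edgeSet, edgeSet_spanGraph hsub] at hxy
    unfold spanGraph
    rw [fromEdgeSet_adj]
    refine ⟨?_, ?_⟩
    · have h1 := hxy.1
      have h2 := hxy.2
      simp only [Finset.coe_insert, Set.mem_insert_iff, Finset.mem_coe, Set.mem_singleton_iff,
        Finset.mem_erase] at h1 h2 ⊢
      tauto
    · rintro rfl
      exact G.not_isDiag_of_mem_edgeSet (hsub hxy.1) (by simp)
  · rw [Finset.card_insert_of_notMem, Finset.card_erase_add_one hfT]
    · exact (spanningTree_iff.1 hT).2.2
    · intro h; exact heT (Finset.mem_of_mem_erase h)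

lemma mem_brokenCycle {G : SimpleGraph V} {T : Finset (Sym2 V)} (hT : IsSpanningTree G T)
    {a b : V} (p : (spanGraph T).Walk b a) (hp : p.IsPath) {f : Sym2 V} :
    f ∈ brokenCycle T s(a, b) ↔ f = s(a, b) ∨ f ∈ p.edges := by
  unfold brokenCycle
  rw [Set.mem_insert_iff]
  refine or_congr_right ⟨fun h => h b a p hp Sym2.eq_swap, fun h u v q hq huv => ?_⟩
  rw [Sym2.eq_iff] at huv
  rcases huv with ⟨rfl, rfl⟩ | ⟨rfl, rfl⟩
  · have := (hT.2.2.subsingleton_path b a).elim ⟨p, hp⟩ ⟨q.reverse, hq.reverse⟩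
    rw [Subtype.mk.injEq] at this
    rw [this] at h
    simpa using h
  · have := (hT.2.2.subsingleton_path b a).elim ⟨p, hp⟩ ⟨q, hq⟩
    rw [Subtype.mk.injEq] at this
    rwa [this] at h

lemma brokenCycle_subset {G : SimpleGraph V} {T : Finset (Sym2 V)} (hT : IsSpanningTree G T)
    {e f : Sym2 V} (hf : f ∈ brokenCycle T e) : f = e ∨ f ∈ T := by
  induction e with
  | h a b =>
    obtain ⟨p, hp⟩ := hT.2.1.exists_isPath b a
    rw [mem_brokenCycle hT p hp] at hf
    refine hf.imp_right fun h => ?_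
    have := p.edges_subset_edgeSet h
    rwa [edgeSet_spanGraph hT.1] at this

lemma swap_broken [Fintype V] {G : SimpleGraph V} {T : Finset (Sym2 V)} (hT : IsSpanningTree G T)
    {e f : Sym2 V} (he : e ∈ G.edgeSet) (heT : e ∉ T) (hf : f ∈ brokenCycle T e) (hfe : f ≠ e) :
    IsSpanningTree G (insert e (T.erase f)) := by
  induction e with
  | h a b =>
    obtain ⟨p, hp⟩ := hT.2.1.exists_isPath b a
    rw [mem_brokenCycle hT p hp] at hf
    exact swap_spanning hT he heT p hp (hf.resolve_left hfe)

/-- Exchange: an edge of `T'` outside `T` can be replaced by an edge of its broken cycle. -/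
lemma exchange_s3 [Fintype V] {G : SimpleGraph V} {T T' : Finset (Sym2 V)} (hT : IsSpanningTree G T)
    (hT' : IsSpanningTree G T') {e : Sym2 V} (he : e ∈ T') (heT : e ∉ T) :
    ∃ f ∈ brokenCycle T e, f ∈ T ∧ f ∉ T' ∧ IsSpanningTree G (insert f (T'.erase e)) := by
  induction e with
  | h a b =>
    obtain ⟨p, hp⟩ := hT.2.1.exists_isPath b a
    have hbr : (spanGraph T').IsBridge s(a, b) := by
      refine isAcyclic_iff_forall_isBridge.1 hT'.2.2 ?_
      rw [edgeSet_spanGraph hT'.1]; exact he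
    rw [isBridge_iff] at hbr
    obtain ⟨d, hd, h1, h2⟩ := p.exists_boundary_dart
      {x | ((spanGraph T').deleteEdges {s(a, b)}).Reachable b x} (Reachable.refl _)
      (fun h => hbr (Reachable.symm h))
    have h1' : ((spanGraph T').deleteEdges {s(a, b)}).Reachable b d.fst := h1
    have h2' : ¬ ((spanGraph T').deleteEdges {s(a, b)}).Reachable b d.snd := h2
    have hnr : ¬ ((spanGraph T').deleteEdges {s(a, b)}).Reachable d.snd d.fst :=
      fun h => h2' (h1'.trans h.symm)
    have hfp : s(d.fst, d.snd) ∈ p.edges := by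
      rw [Walk.edges]
      exact List.mem_map.2 ⟨d, hd, rfl⟩
    have hfT : s(d.fst, d.snd) ∈ T := by
      have := p.edges_subset_edgeSet hfp
      rwa [edgeSet_spanGraph hT.1] at this
    have hne : s(d.fst, d.snd) ≠ s(a, b) := fun h => heT (h ▸ hfT)
    have hfT' : s(d.fst, d.snd) ∉ T' := by
      intro h
      refine hnr (Adj.reachable ?_)
      rw [deleteEdges_adj, ← mem_edgeSet, edgeSet_spanGraph hT'.1, Sym2.eq_swap]
      exact ⟨h, hne⟩
    refine ⟨s(d.fst, d.snd), ?_, hfT, hfT', ?_⟩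
    · rw [mem_brokenCycle hT p hp]; exact Or.inr hfp
    · obtain ⟨q, hq⟩ := hT'.2.1.exists_isPath d.snd d.fst
      refine swap_spanning hT' (hT.1 hfT) hfT' q hq ?_
      by_contra hcon
      exact hnr (reachable_deleteEdges_iff_exists_walk.2 ⟨q, hcon⟩)

lemma treeWeight_swap [Fintype V] {G : SimpleGraph V} (w : G.edgeSet → ℝ) {T : Finset (Sym2 V)}
    (e f : G.edgeSet) (he : (e : Sym2 V) ∉ T) (hf : (f : Sym2 V) ∈ T) :
    treeWeight G w (insert (e : Sym2 V) (T.erase f)) = treeWeight G w T - w f + w e := by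
  unfold treeWeight
  have : ∀ x : G.edgeSet, (if (x : Sym2 V) ∈ insert (e : Sym2 V) (T.erase f) then w x else 0)
      = (if (x : Sym2 V) ∈ T then w x else 0) - (if x = f then w x else 0)
        + (if x = e then w x else 0) := by
    intro x
    by_cases hxe : x = e
    · subst hxe
      have : x ≠ f := by rintro rfl; exact he hf
      simp [he, this]
    · have h1 : (x : Sym2 V) ≠ e := fun h => hxe (Subtype.ext h)
      by_cases hxf : x = f
      · subst hxf; simp [h1, hf, hxe]
      · have h2 : (x : Sym2 V) ≠ f := fun h => hxf (Subtype.ext h)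
        simp [h1, h2, hxe, hxf]
  rw [Finset.sum_congr rfl fun x _ => this x]
  rw [Finset.sum_add_distrib, Finset.sum_sub_distrib]
  simp

lemma mem_mstEvent [Fintype V] {G : SimpleGraph V} {T : Finset (Sym2 V)} (hT : IsSpanningTree G T)
    (w : G.edgeSet → ℝ) :
    w ∈ mstEvent G T ↔ ∀ e f : G.edgeSet, (e : Sym2 V) ∉ T → (f : Sym2 V) ∈ brokenCycle T e →
      f ≠ e → w f < w e := by
  constructor
  · rintro ⟨_, h⟩ e f he hf hfe
    have hfe' : (f : Sym2 V) ≠ e := fun h => hfe (Subtype.ext h)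
    have hfT := (brokenCycle_subset hT hf).resolve_left hfe'
    have := h _ (swap_broken hT e.2 he hf hfe') (by
      intro h; apply he; rw [← h]; simp)
    rw [treeWeight_swap w e f he hfT] at this
    linarith
  · intro h
    refine ⟨hT, ?_⟩
    have main : ∀ n : ℕ, ∀ T' : Finset (Sym2 V), (T' \ T).card = n → IsSpanningTree G T' →
        T' ≠ T → treeWeight G w T < treeWeight G w T' := by
      intro n
      induction n with
      | zero =>
        intro T' hn hT' hne
        exfalso; apply hne
        rw [Finset.card_eq_zero, Finset.sdiff_eq_empty_iff_subset] at hn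
        refine Finset.eq_of_subset_of_card_le hn ?_
        have h1 := (spanningTree_iff.1 hT).2.2
        have h2 := (spanningTree_iff.1 hT').2.2
        omega
      | succ n ih =>
        intro T' hn hT' hne
        have : (T' \ T).Nonempty := by rw [← Finset.card_pos]; omega
        obtain ⟨e, he⟩ := this
        have he0 := he
        rw [Finset.mem_sdiff] at he
        obtain ⟨f, hfb, hfT, hfT', hsp⟩ := exchange_s3 hT hT' he.1 he.2
        have hfe : f ≠ e := fun h => he.2 (h ▸ hfT)
        have hlt := h ⟨e, hT'.1 he.1⟩ ⟨f, hT.1 hfT⟩ he.2 hfb (by simpa using hfe)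
        have hw := treeWeight_swap w (T := T') ⟨f, hT.1 hfT⟩ ⟨e, hT'.1 he.1⟩ hfT' he.1
        simp only at hw
        have hcard : (insert f (T'.erase e) \ T).card = n := by
          have : insert f (T'.erase e) \ T = (T' \ T).erase e := by
            ext x
            simp only [Finset.mem_sdiff, Finset.mem_insert, Finset.mem_erase]
            constructor
            · rintro ⟨rfl | h1, h2⟩
              · exact absurd hfT h2
              · exact ⟨h1.1, h1.2, h2⟩
            · rintro ⟨h1, h2, h3⟩
              exact ⟨Or.inr ⟨h1, h2⟩, h3⟩
          rw [this, Finset.card_erase_of_mem he0, hn]; rfl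
        by_cases heq : insert f (T'.erase e) = T
        · rw [heq] at hw; linarith
        · have := ih _ hcard hsp heq
          linarith
    intro T' h1 h2
    exact main _ T' rfl h1 h2

end graph

section final

variable [Fintype V] {G : SimpleGraph V} {T : Finset (Sym2 V)} {k : ℕ}

/-- The `j`-th non-tree edge. -/
def nte (π : Fin k ≃ ↥(G.edgeFinset \ T)) (j : Fin k) : G.edgeSet :=
  ⟨(π j).1, by have := (π j).2; rw [Finset.mem_sdiff, mem_edgeFinset] at this; exact this.1⟩

lemma nte_notMem (π : Fin k ≃ ↥(G.edgeFinset \ T)) (j : Fin k) : (nte π j : Sym2 V) ∉ T :=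
  (Finset.mem_sdiff.1 (π j).2).2

lemma nte_inj (π : Fin k ≃ ↥(G.edgeFinset \ T)) : Function.Injective (nte π) := by
  intro i j h
  apply π.injective
  apply Subtype.ext
  exact congrArg (fun x : G.edgeSet => (x : Sym2 V)) h

lemma nte_surj (π : Fin k ≃ ↥(G.edgeFinset \ T)) (e : G.edgeSet) (he : (e : Sym2 V) ∉ T) :
    ∃ j, e = nte π j := by
  refine ⟨π.symm ⟨e, Finset.mem_sdiff.2 ⟨mem_edgeFinset.2 e.2, he⟩⟩, ?_⟩
  apply Subtype.ext
  simp [nte]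

lemma mem_orderEvent (π : Fin k ≃ ↥(G.edgeFinset \ T)) (w : G.edgeSet → ℝ) :
    (w ∈ orderEvent G fun i => (π i).1) ↔ StrictMono (fun i => w (nte π i)) := by
  constructor
  · intro h i j hij
    exact h i j (nte π i) (nte π j) hij rfl rfl
  · intro h i j e e' hij he he'
    have h1 : e = nte π i := Subtype.ext he
    have h2 : e' = nte π j := Subtype.ext he'
    rw [h1, h2]
    exact h hij

/-- Union of the first broken cycles. -/
def unionD (π : Fin k ≃ ↥(G.edgeFinset \ T)) (n : ℕ) : Finset G.edgeSet :=
  Finset.univ.filter fun f => ∃ i : Fin k, i.1 < n ∧ (f : Sym2 V) ∈ brokenCycle T (π i).1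

lemma mem_unionD (π : Fin k ≃ ↥(G.edgeFinset \ T)) (n : ℕ) (f : G.edgeSet) :
    f ∈ unionD π n ↔ ∃ i : Fin k, i.1 < n ∧ (f : Sym2 V) ∈ brokenCycle T (nte π i) := by
  simp [unionD, nte]

lemma self_mem_broken (e : Sym2 V) : e ∈ brokenCycle T e := Set.mem_insert _ _

lemma card_unionD (hT : IsSpanningTree G T) (π : Fin k ≃ ↥(G.edgeFinset \ T)) (j : Fin k) :
    (⋃ i, ⋃ (_ : i ≤ j), brokenCycle T (π i).1).ncard = (unionD π (j + 1)).card := by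
  have : (⋃ i, ⋃ (_ : i ≤ j), brokenCycle T (π i).1)
      = (fun x : G.edgeSet => (x : Sym2 V)) '' (unionD π (j + 1) : Set G.edgeSet) := by
    ext f
    simp only [Set.mem_iUnion, Set.mem_image, Finset.mem_coe, mem_unionD]
    constructor
    · rintro ⟨i, hi, hf⟩
      have hfG : f ∈ G.edgeSet := by
        rcases brokenCycle_subset hT hf with h | h
        · rw [h]; exact (nte π i).2
        · exact hT.1 h
      exact ⟨⟨f, hfG⟩, ⟨i, Nat.lt_succ_of_le hi, hf⟩, rfl⟩
    · rintro ⟨f, ⟨i, hi, hf⟩, rfl⟩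
      exact ⟨i, Nat.le_of_lt_succ hi, hf⟩
  rw [this, Set.ncard_image_of_injective _ Subtype.val_injective, Set.ncard_coe_finset]

lemma event_eq (hT : IsSpanningTree G T) (π : Fin k ≃ ↥(G.edgeFinset \ T)) :
    (mstEvent G T ∩ orderEvent G fun i => (π i).1)
      = {w | ∀ j : Fin k, ∀ f ∈ unionD π (j + 1), f ≠ nte π j → w f < w (nte π j)} := by
  ext w
  rw [Set.mem_inter_iff, mem_mstEvent hT, mem_orderEvent]
  constructor
  · rintro ⟨h1, h2⟩ j f hf hfj
    obtain ⟨i, hi, hf⟩ := (mem_unionD π _ f).1 hf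
    have hij : i ≤ j := Nat.le_of_lt_succ hi
    have hle : w (nte π i) ≤ w (nte π j) := h2.monotone hij
    by_cases hfi : f = nte π i
    · have : i ≠ j := by rintro rfl; exact hfj hfi
      rw [hfi]
      exact h2 (lt_of_le_of_ne hij this)
    · exact (h1 _ f (nte_notMem π i) hf hfi).trans_le hle
  · intro h
    refine ⟨?_, ?_⟩
    · intro e f he hf hfe
      obtain ⟨j, rfl⟩ := nte_surj π e he
      exact h j f ((mem_unionD π _ f).2 ⟨j, Nat.lt_succ_self _, hf⟩) hfe
    · intro i j hij
      refine h j _ ((mem_unionD π _ _).2 ⟨i, ?_, self_mem_broken _⟩) ?_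
      · exact Nat.lt_succ_of_lt hij
      · exact fun h => hij.ne (nte_inj π h)

lemma formula_one (hT : IsSpanningTree G T) (π : Fin k ≃ ↥(G.edgeFinset \ T)) :
    (edgeUniform G.edgeSet (mstEvent G T ∩ orderEvent G fun i => (π i).1)).toReal
        = ∏ j : Fin k,
            1 / ((⋃ i, ⋃ (_ : i ≤ j), brokenCycle T (π i).1).ncard : ℝ) := by
  rw [event_eq hT]
  simp_rw [card_unionD hT]
  refine chain_measure (unionD π) ?_ ?_ (nte π) ?_ ?_
  · ext f; simp [mem_unionD]
  · intro m n hmn f hf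
    obtain ⟨i, hi, hf⟩ := (mem_unionD π _ f).1 hf
    exact (mem_unionD π _ f).2 ⟨i, hi.trans_le hmn, hf⟩
  · intro j
    exact (mem_unionD π _ _).2 ⟨j, Nat.lt_succ_self _, self_mem_broken _⟩
  · intro j hj
    obtain ⟨i, hi, hf⟩ := (mem_unionD π _ _).1 hj
    rcases brokenCycle_subset hT hf with h | h
    · have : j = i := nte_inj π (Subtype.ext h)
      subst this
      exact lt_irrefl _ hi
    · exact nte_notMem π j h

lemma meas_event (hT : IsSpanningTree G T) (π : Fin k ≃ ↥(G.edgeFinset \ T)) :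
    MeasurableSet (mstEvent G T ∩ orderEvent G fun i => (π i).1) := by
  rw [event_eq hT]
  have : {w : G.edgeSet → ℝ | ∀ j : Fin k, ∀ f ∈ unionD π (j + 1), f ≠ nte π j →
        w f < w (nte π j)}
      = ⋂ j : Fin k, {w | ∀ f ∈ (unionD π (j + 1)).erase (nte π j), w f < w (nte π j)} := by
    ext w
    simp only [Set.mem_ofPred_eq, Set.mem_iInter, Finset.mem_erase]
    exact forall_congr' fun j => forall_congr' fun f =>
      ⟨fun h h' => h h'.2 h'.1, fun h a b => h ⟨b, a⟩⟩
  rw [this]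
  exact MeasurableSet.iInter fun j => meas_lt' _ _

lemma formula_two (hT : IsSpanningTree G T) (hk : k = (G.edgeFinset \ T).card) :
    mstProb G T = ∑ π : Fin k ≃ ↥(G.edgeFinset \ T),
      (edgeUniform G.edgeSet (mstEvent G T ∩ orderEvent G fun i => (π i).1)).toReal := by
  have hcov : edgeUniform G.edgeSet (mstEvent G T)
      = edgeUniform G.edgeSet (⋃ π : Fin k ≃ ↥(G.edgeFinset \ T),
        (mstEvent G T ∩ orderEvent G fun i => (π i).1)) := by
    refine measure_congr ?_
    filter_upwards [ae_inj (E := G.edgeSet)] with w hw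
    refine propext ?_
    change w ∈ mstEvent G T ↔ w ∈ ⋃ π : Fin k ≃ ↥(G.edgeFinset \ T),
        (mstEvent G T ∩ orderEvent G fun i => (π i).1)
    rw [Set.mem_iUnion]
    constructor
    · intro h
      let π₀ : Fin k ≃ ↥(G.edgeFinset \ T) := Fintype.equivOfCardEq
        (by rw [Fintype.card_fin, Fintype.card_coe, hk])
      refine ⟨(Tuple.sort fun i => w (nte π₀ i)).trans π₀, h, ?_⟩
      rw [mem_orderEvent]
      refine Monotone.strictMono_of_injective ?_ (hw.comp (nte_inj _))
      exact Tuple.monotone_sort fun i => w (nte π₀ i)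
    · rintro ⟨π, h⟩; exact h.1
  have hdisj : Pairwise (Function.onFun Disjoint fun π : Fin k ≃ ↥(G.edgeFinset \ T) =>
      (mstEvent G T ∩ orderEvent G fun i => (π i).1)) := by
    intro π ρ hne
    rw [Function.onFun, Set.disjoint_left]
    rintro w ⟨_, h1⟩ ⟨_, h2⟩
    apply hne
    rw [mem_orderEvent] at h1 h2
    have h3 : Monotone ((fun i => w (nte π i)) ∘ (ρ.trans π.symm)) := by
      have : (fun i => w (nte π i)) ∘ (ρ.trans π.symm) = fun i => w (nte ρ i) := by
        funext i; simp [nte]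
      rw [this]; exact h2.monotone
    have h4 := Tuple.unique_monotone (σ := Equiv.refl _) h1.monotone h3
    apply Equiv.ext
    intro i
    have h5 := h1.injective (congrFun h4 i)
    simp only [Equiv.refl_apply, Equiv.trans_apply] at h5
    rw [Equiv.eq_symm_apply] at h5
    exact h5
  unfold mstProb
  rw [hcov, measure_iUnion hdisj (meas_event hT), tsum_fintype,
    ENNReal.toReal_sum (fun _ _ => measure_ne_top _ _)]

end final

/-- The external (reverse-delete) formula: for a spanning tree `T` of a finite connected
graph `G` and any ordering `π` of the non-tree edges, the probability that `T` is the
unique MST with the non-tree weights in order `π` equals `∏_j 1/|D_j|`, where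
`D_j` is the union of the broken cycles of the first `j` non-tree edges; summing over
all orderings gives `P_MST(T; G)`. -/
theorem external_formula [Fintype V] (G : SimpleGraph V) (hG : G.Connected)
    (T : Finset (Sym2 V)) (hT : IsSpanningTree G T)
    (k : ℕ) (hk : k = (G.edgeFinset \ T).card) :
    (∀ π : Fin k ≃ ↥(G.edgeFinset \ T),
      (edgeUniform G.edgeSet
          (mstEvent G T ∩ orderEvent G fun i => (π i).1)).toReal
        = ∏ j : Fin k,
            1 / ((⋃ i, ⋃ (_ : i ≤ j), brokenCycle T (π i).1).ncard : ℝ)) ∧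
    mstProb G T = ∑ π : Fin k ≃ ↥(G.edgeFinset \ T), ∏ j : Fin k,
      1 / ((⋃ i, ⋃ (_ : i ≤ j), brokenCycle T (π i).1).ncard : ℝ) := by
  refine ⟨fun π => formula_one hT π, ?_⟩
  rw [formula_two hT hk]
  exact Finset.sum_congr rfl fun π _ => formula_one hT π

end RST
end
end

section
/- Let n ≥ 2 and let T⋆ be a spanning tree of the complete graph K_n consisting of all n−1 edges incident to one fixed vertex (a star). Then P_MST(T⋆; K_n) = 1/(2n−3)!!, where (2k−1)!! denotes the product (2k−1)(2k−3)⋯3·1. -/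
open MeasureTheory SimpleGraph
open scoped Classical

noncomputable section

namespace RST

variable {V : Type*}

def extW (G : SimpleGraph V) (w : G.edgeSet → ℝ) (e : Sym2 V) : ℝ :=
  if h : e ∈ G.edgeSet then w ⟨e, h⟩ else 0

lemma treeWeight_eq [Fintype V] (G : SimpleGraph V) (w : G.edgeSet → ℝ) (T : Finset (Sym2 V))
    (hT : ↑T ⊆ G.edgeSet) : treeWeight G w T = ∑ e ∈ T, extW G w e := by
  unfold treeWeight
  rw [← Finset.sum_filter]
  refine Finset.sum_bij (fun e _ => (e : Sym2 V)) ?_ ?_ ?_ ?_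
  · intro e he; simpa using he
  · intro a _ b _ h; exact Subtype.ext h
  · intro e he
    exact ⟨⟨e, hT he⟩, by simpa using he, rfl⟩
  · intro e _
    simp [extW, e.2]

lemma spanGraph_edgeSet (T : Finset (Sym2 V)) (hT : (↑T : Set (Sym2 V)) ⊆ (⊤ : SimpleGraph V).edgeSet) :
    (spanGraph T).edgeSet = ↑T := by
  unfold spanGraph
  rw [edgeSet_fromEdgeSet]
  ext e
  simp only [Set.mem_sdiff, and_iff_left_iff_imp]
  intro he
  have := hT he
  rw [edgeSet_top] at this
  exact this

lemma isSpanningTree_iff [Fintype V] (T : Finset (Sym2 V)) :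
    IsSpanningTree (⊤ : SimpleGraph V) T ↔ ↑T ⊆ (⊤ : SimpleGraph V).edgeSet ∧
      (spanGraph T).Connected ∧ T.card + 1 = Fintype.card V := by
  unfold IsSpanningTree
  refine and_congr_right fun hT => ?_
  have h : (spanGraph T).Connected ∧ (spanGraph T).IsAcyclic ↔ (spanGraph T).IsTree :=
    ⟨fun h => ⟨h.1, h.2⟩, fun h => ⟨h.1, h.2⟩⟩
  rw [h, isTree_iff_connected_and_card, spanGraph_edgeSet T hT]
  simp

/-- The star at `v`, as the image of the other vertices. -/
lemma star_eq_image [Fintype V] (v : V) (T : Finset (Sym2 V))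
    (hT : ∀ e, e ∈ T ↔ ¬ e.IsDiag ∧ v ∈ e) :
    T = (Finset.univ.erase v).image fun u => s(v, u) := by
  ext e
  rw [hT]
  simp only [Finset.mem_image, Finset.mem_erase, Finset.mem_univ, and_true]
  constructor
  · rintro ⟨hd, u, rfl⟩
    refine ⟨u, ?_, rfl⟩
    rintro rfl
    exact hd (by simp)
  · rintro ⟨u, hu, rfl⟩
    exact ⟨by simpa using hu.symm, by simp⟩

lemma star_inj (v : V) : Function.Injective fun u => s(v, u) := by
  intro a b h
  exact Sym2.congr_right.1 h

lemma connected_of_reach (G : SimpleGraph V) (v : V) (h : ∀ u, G.Reachable u v) : G.Connected := by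
  rw [connected_iff]
  exact ⟨fun a b => (h a).trans (h b).symm, ⟨v⟩⟩

lemma star_card [Fintype V] (v : V) (T : Finset (Sym2 V))
    (hT : ∀ e, e ∈ T ↔ ¬ e.IsDiag ∧ v ∈ e) : T.card + 1 = Fintype.card V := by
  rw [star_eq_image v T hT, Finset.card_image_of_injective _ (star_inj v),
    Finset.card_erase_of_mem (Finset.mem_univ _), Finset.card_univ]
  have : 0 < Fintype.card V := Fintype.card_pos_iff.2 ⟨v⟩
  omega

lemma star_isSpanningTree [Fintype V] (v : V) (T : Finset (Sym2 V))
    (hT : ∀ e, e ∈ T ↔ ¬ e.IsDiag ∧ v ∈ e) : IsSpanningTree (⊤ : SimpleGraph V) T := by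
  rw [isSpanningTree_iff]
  refine ⟨?_, connected_of_reach _ v ?_, star_card v T hT⟩
  · intro e he
    rw [edgeSet_top]
    exact ((hT e).1 he).1
  · intro u
    by_cases huv : u = v
    · subst huv; rfl
    · refine Adj.reachable ?_
      unfold spanGraph
      rw [fromEdgeSet_adj]
      refine ⟨?_, huv⟩
      rw [Finset.mem_coe, hT]
      simp [huv]

lemma swap_isSpanningTree [Fintype V] (v a b : V) (hab : a ≠ b) (ha : a ≠ v) (hb : b ≠ v)
    (T : Finset (Sym2 V)) (hT : ∀ e, e ∈ T ↔ ¬ e.IsDiag ∧ v ∈ e) :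
    IsSpanningTree (⊤ : SimpleGraph V) (insert s(a, b) (T.erase s(v, a))) := by
  have hnot : s(a, b) ∉ T := by
    rw [hT]; simp [ha.symm, hb.symm]
  have hmem : s(v, a) ∈ T := by
    rw [hT]; simp [ha.symm]
  rw [isSpanningTree_iff]
  have hadj : ∀ u, u ≠ v → u ≠ a →
      (spanGraph (insert s(a, b) (T.erase s(v, a)))).Reachable u v := by
    intro u huv hua
    refine Adj.reachable ?_
    unfold spanGraph
    rw [fromEdgeSet_adj]
    refine ⟨?_, huv⟩
    rw [Finset.mem_coe, Finset.mem_insert, Finset.mem_erase, hT]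
    right
    refine ⟨?_, by simp [huv]⟩
    rw [Sym2.eq_swap]
    exact fun h => hua (star_inj v h)
  refine ⟨?_, connected_of_reach _ v ?_, ?_⟩
  · intro e he
    rw [edgeSet_top]
    rw [Finset.mem_coe, Finset.mem_insert, Finset.mem_erase, hT] at he
    rcases he with rfl | he
    · simpa using hab
    · exact he.2.1
  · intro u
    by_cases huv : u = v
    · subst huv; rfl
    by_cases hua : u = a
    · subst hua
      refine Reachable.trans (Adj.reachable ?_) (hadj b hb hab.symm)
      unfold spanGraph
      rw [fromEdgeSet_adj]
      exact ⟨by simp, hab⟩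
    · exact hadj u huv hua
  · rw [Finset.card_insert_of_notMem (fun h => hnot (Finset.mem_of_mem_erase h)),
      Finset.card_erase_add_one hmem, star_card v T hT]

lemma exists_parent (G : SimpleGraph V) (hG : G.Connected) (v u : V) (huv : u ≠ v) :
    ∃ u', G.Adj u u' ∧ G.dist u' v < G.dist u v := by
  obtain ⟨p, hp⟩ := hG.exists_walk_length_eq_dist u v
  cases p with
  | nil => exact absurd rfl huv
  | cons h q =>
    refine ⟨_, h, ?_⟩
    have := dist_le q
    rw [Walk.length_cons] at hp
    omega

/-- Every spanning tree is the injective image of its parent edges. -/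
lemma tree_eq_image [Fintype V] (v : V) (T : Finset (Sym2 V))
    (hT : IsSpanningTree (⊤ : SimpleGraph V) T) :
    ∃ f : V → V, (∀ u, u ≠ v → f u ≠ u) ∧
      Set.InjOn (fun u => s(u, f u)) (Finset.univ.erase v : Finset V) ∧
      T = (Finset.univ.erase v).image fun u => s(u, f u) := by
  obtain ⟨hsub, hconn, hcard⟩ := (isSpanningTree_iff T).1 hT
  have : ∀ u, ∃ u', u ≠ v → (spanGraph T).Adj u u' ∧
      (spanGraph T).dist u' v < (spanGraph T).dist u v := by
    intro u
    by_cases h : u = v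
    · exact ⟨u, fun h' => absurd h h'⟩
    · obtain ⟨u', h'⟩ := exists_parent _ hconn v u h
      exact ⟨u', fun _ => h'⟩
  choose f hf using this
  have hinj : Set.InjOn (fun u => s(u, f u)) (Finset.univ.erase v : Finset V) := by
    intro a ha b hb h
    simp only [Finset.coe_erase, Finset.coe_univ, Set.mem_sdiff, Set.mem_univ, true_and,
      Set.mem_singleton_iff] at ha hb
    rcases Sym2.eq_iff.1 h with h | h
    · exact h.1
    · have h1 := (hf a ha).2
      have h2 := (hf b hb).2
      rw [h.2] at h1
      rw [← h.1] at h2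
      omega
  refine ⟨f, fun u hu => (hf u hu).1.ne', hinj, ?_⟩
  symm
  apply Finset.eq_of_subset_of_card_le
  · intro e he
    simp only [Finset.mem_image, Finset.mem_erase, Finset.mem_univ, and_true] at he
    obtain ⟨u, hu, rfl⟩ := he
    have := (hf u hu).1
    unfold spanGraph at this
    rw [fromEdgeSet_adj] at this
    exact this.1
  · rw [Finset.card_image_of_injOn hinj, Finset.card_erase_of_mem (Finset.mem_univ _),
      Finset.card_univ]
    omega

lemma mem_mstEvent_star [Fintype V] (v : V) (T : Finset (Sym2 V))
    (hT : ∀ e, e ∈ T ↔ ¬ e.IsDiag ∧ v ∈ e) (w : (⊤ : SimpleGraph V).edgeSet → ℝ) :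
    w ∈ mstEvent (⊤ : SimpleGraph V) T ↔ ∀ a b, a ≠ b → a ≠ v → b ≠ v →
      extW ⊤ w s(v, a) < extW ⊤ w s(a, b) := by
  have hst := star_isSpanningTree v T hT
  constructor
  · rintro ⟨-, h⟩ a b hab ha hb
    have hsw := swap_isSpanningTree v a b hab ha hb T hT
    have hnot : s(a, b) ∉ T := by
      rw [hT]; simp [ha.symm, hb.symm]
    have hmem : s(v, a) ∈ T := by
      rw [hT]; simp [ha.symm]
    have := h _ hsw (fun h => hnot (h ▸ Finset.mem_insert_self _ _))
    rw [treeWeight_eq _ _ _ hst.1, treeWeight_eq _ _ _ hsw.1,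
      Finset.sum_insert (fun h => hnot (Finset.mem_of_mem_erase h)),
      ← Finset.add_sum_erase _ _ hmem] at this
    linarith
  · intro h
    refine ⟨hst, fun T' hT' hne => ?_⟩
    rw [treeWeight_eq _ _ _ hst.1, treeWeight_eq _ _ _ hT'.1]
    obtain ⟨f, hf, hinj, him⟩ := tree_eq_image v T' hT'
    have e1 : ∑ e ∈ T, extW ⊤ w e = ∑ u ∈ Finset.univ.erase v, extW ⊤ w s(v, u) := by
      rw [star_eq_image v T hT, Finset.sum_image (fun a _ b _ h => star_inj v h)]
    have e2 : ∑ e ∈ T', extW ⊤ w e = ∑ u ∈ Finset.univ.erase v, extW ⊤ w s(u, f u) := by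
      rw [him, Finset.sum_image hinj]
    rw [e1, e2]
    have hex : ∃ u, u ≠ v ∧ f u ≠ v := by
      by_contra hcon
      push Not at hcon
      apply hne
      rw [him, star_eq_image v T hT]
      refine Finset.image_congr fun u hu => ?_
      have hu' : u ≠ v := by simpa using hu
      simp only [hcon u hu']
      exact Sym2.eq_swap
    refine Finset.sum_lt_sum ?_ ?_
    · intro u hu
      have hu' : u ≠ v := by simpa using hu
      by_cases hfu : f u = v
      · rw [hfu, Sym2.eq_swap]
      · exact (h u (f u) (hf u hu').symm hu' hfu).le
    · obtain ⟨u, hu, hfu⟩ := hex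
      exact ⟨u, by simpa using hu, h u (f u) (hf u hu).symm hu hfu⟩

/-- Lebesgue measure on `[s,1]`. -/
def nu (s : ℝ) : Measure ℝ := (volume : Measure ℝ).restrict (Set.Icc s 1)

instance (s : ℝ) : IsFiniteMeasure (nu s) := by unfold nu; infer_instance

/-- pair product -/
def pairF (m : ℕ) (x : Fin m → ℝ) : ENNReal :=
  ∏ i, ∏ j, if i < j then ENNReal.ofReal (1 - max (x i) (x j)) else 1

def starF (m a : ℕ) (x : Fin m → ℝ) : ENNReal :=
  (∏ i, ENNReal.ofReal (1 - x i) ^ a) * pairF m x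

/-- constants -/
def starC : ℕ → ℕ → ℝ
  | 0, _ => 1
  | m + 1, a => (m + 1) / (((m + 1) * (a + 1) + (m + 1).choose 2 : ℕ) : ℝ) * starC m (a + 1)

lemma starC_nonneg (m a : ℕ) : 0 ≤ starC m a := by
  induction m generalizing a with
  | zero => simp [starC]
  | succ m ih => rw [starC]; have := ih (a + 1); positivity

lemma starC_succ (m a : ℕ) : starC (m + 1) a = 2 / (2 * a + (m + 1) + 1) * starC m (a + 1) := by
  rw [starC]
  congr 1
  push_cast
  rw [Nat.cast_choose_two]
  push_cast
  have e : (m : ℝ) + 1 - 1 = m := by ring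
  rw [e, div_eq_div_iff (by positivity) (by positivity)]
  ring

lemma starC_eq (m a : ℕ) :
    starC m a = ∏ k ∈ Finset.range m, (2 / (2 * a + m + 1 + k) : ℝ) := by
  induction m generalizing a with
  | zero => simp [starC]
  | succ m ih =>
    rw [starC_succ, ih, Finset.prod_range_succ', mul_comm]
    push_cast
    congr 1
    · refine Finset.prod_congr rfl fun k _ => ?_
      congr 1; ring
    · congr 1; ring

lemma starC_zero (m : ℕ) : starC m 0 = 1 / (Nat.doubleFactorial (2 * m - 1) : ℝ) := by
  induction m with
  | zero => simp [starC]
  | succ m ih =>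
    have key : starC (m + 1) 0 * (2 * m + 1) = starC m 0 := by
      rw [starC_eq, starC_eq]
      have h : (∏ k ∈ Finset.range m, (2 / (2 * (0:ℕ) + m + 1 + k) : ℝ)) * (2 / (2 * m + 1)) *
          (2 / (2 * m + 2)) =
          ∏ k ∈ Finset.range (m + 2), (2 / (2 * (0:ℕ) + m + 1 + k) : ℝ) := by
        rw [Finset.prod_range_succ, Finset.prod_range_succ]
        push_cast
        congr 2
        · congr 1; ring
        · ring
      rw [Finset.prod_range_succ'] at h
      have h2 : ∏ k ∈ Finset.range (m + 1), (2 / (2 * (0:ℕ) + m + 1 + (k + 1 : ℕ)) : ℝ) =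
         ∏ k ∈ Finset.range (m + 1), (2 / (2 * (0:ℕ) + (m + 1 : ℕ) + 1 + k) : ℝ) := by
        refine Finset.prod_congr rfl fun k _ => ?_
        push_cast
        congr 1; ring
      rw [h2] at h
      set A := ∏ k ∈ Finset.range (m + 1), (2 / (2 * (0:ℕ) + (m + 1 : ℕ) + 1 + k) : ℝ)
      set B := ∏ k ∈ Finset.range m, (2 / (2 * (0:ℕ) + m + 1 + k) : ℝ)
      have e1 : (2 * m + 1 : ℝ) ≠ 0 := by positivity
      have e2 : (2 * m + 2 : ℝ) ≠ 0 := by positivity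
      have e3 : (m + 1 : ℝ) ≠ 0 := by positivity
      push_cast at h
      simp only [mul_zero, zero_add, add_zero] at h
      field_simp at h
      linarith
    have hd : (Nat.doubleFactorial (2 * (m + 1) - 1) : ℝ)
        = (2 * m + 1) * Nat.doubleFactorial (2 * m - 1) := by
      cases m with
      | zero => simp
      | succ k =>
        have : 2 * (k + 1 + 1) - 1 = (2 * (k + 1) - 1) + 2 := by omega
        rw [this, Nat.doubleFactorial_add_two]
        have : 2 * (k + 1) - 1 + 2 = 2 * (k + 1) + 1 := by omega
        rw [this]
        push_cast; ring
    rw [ih] at key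
    rw [hd]
    have e1 : (2 * m + 1 : ℝ) ≠ 0 := by positivity
    rw [eq_div_iff (by positivity), ← mul_assoc, key]
    have : (Nat.doubleFactorial (2 * m - 1) : ℝ) ≠ 0 := by
      exact_mod_cast (Nat.doubleFactorial_pos _).ne'
    field_simp

lemma pairF_insert (m : ℕ) (p : Fin (m + 1)) (t : ℝ) (y : Fin m → ℝ) :
    pairF (m + 1) (p.insertNth t y) =
      (∏ j, ENNReal.ofReal (1 - max t (y j))) * pairF m y := by
  unfold pairF
  rw [Fin.prod_univ_succAbove _ p, Fin.prod_univ_succAbove _ p]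
  simp only [Fin.prod_univ_succAbove _ p, lt_irrefl, if_false, one_mul,
    Fin.insertNth_apply_same, Fin.insertNth_apply_succAbove, Finset.prod_mul_distrib]
  rw [← mul_assoc, ← Finset.prod_mul_distrib]
  congr 1
  · refine Finset.prod_congr rfl fun j _ => ?_
    rcases lt_or_gt_of_ne (Fin.succAbove_ne p j) with h | h
    · simp [h, h.not_gt, max_comm]
    · simp [h, h.not_gt]
  · simp [Fin.succAbove_lt_succAbove_iff]

lemma starF_insert (m a : ℕ) (p : Fin (m + 1)) (t : ℝ) (y : Fin m → ℝ) (hy : ∀ j, t ≤ y j) :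
    starF (m + 1) a (p.insertNth t y) = ENNReal.ofReal (1 - t) ^ a * starF m (a + 1) y := by
  unfold starF
  rw [pairF_insert, Fin.prod_univ_succAbove _ p]
  simp only [Fin.insertNth_apply_same, Fin.insertNth_apply_succAbove]
  simp only [max_eq_right (hy _), pow_succ, Finset.prod_mul_distrib]
  ring

lemma measurable_starF (m a : ℕ) : Measurable (starF m a) := by
  unfold starF pairF
  refine Measurable.mul (by fun_prop) ?_
  refine Finset.measurable_prod _ fun i _ => Finset.measurable_prod _ fun j _ => ?_
  split_ifs <;> fun_prop

/-- first argmin is `p` -/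
def argSet (m : ℕ) (p : Fin m) : Set (Fin m → ℝ) :=
  {x | ∀ j, if j < p then x p < x j else x p ≤ x j}

lemma measurableSet_argSet (m : ℕ) (p : Fin m) : MeasurableSet (argSet m p) := by
  unfold argSet
  rw [Set.ofPred_forall]
  refine MeasurableSet.iInter fun j => ?_
  split_ifs
  · exact measurableSet_lt (by fun_prop) (by fun_prop)
  · exact measurableSet_le (by fun_prop) (by fun_prop)

lemma argSet_disj (m : ℕ) : Pairwise (Function.onFun Disjoint (argSet m)) := by
  intro p q hpq
  rw [Function.onFun, Set.disjoint_left]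
  intro x hp hq
  have h1 := hp q
  have h2 := hq p
  rcases lt_or_gt_of_ne hpq with h | h
  · simp only [h, h.not_gt, if_true, if_false] at h1 h2; linarith
  · simp only [h, h.not_gt, if_true, if_false] at h1 h2; linarith

lemma argSet_union (m : ℕ) : ⋃ p, argSet (m + 1) p = Set.univ := by
  rw [Set.eq_univ_iff_forall]
  intro x
  rw [Set.mem_iUnion]
  have hne : (Finset.univ.filter fun p : Fin (m + 1) => ∀ j, x p ≤ x j).Nonempty := by
    obtain ⟨p, hp⟩ := Finite.exists_min x
    exact ⟨p, by simpa using hp⟩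
  refine ⟨Finset.min' _ hne, fun j => ?_⟩
  have hm := Finset.min'_mem _ hne
  simp only [Finset.mem_filter, Finset.mem_univ, true_and] at hm
  split_ifs with hj
  · by_contra hcon
    push Not at hcon
    have : j ∈ (Finset.univ.filter fun p : Fin (m + 1) => ∀ j, x p ≤ x j) := by
      simp only [Finset.mem_filter, Finset.mem_univ, true_and]
      exact fun k => hcon.trans (hm k)
    exact absurd (Finset.min'_le _ _ this) (not_le.2 hj)
  · exact hm j

lemma lintegral_one_dim (s : ℝ) (hs : s ≤ 1) (e : ℕ) :
    ∫⁻ t, ENNReal.ofReal (1 - t) ^ e ∂(nu s) =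
      ENNReal.ofReal (1 / ((e + 1 : ℕ) : ℝ)) * ENNReal.ofReal (1 - s) ^ (e + 1) := by
  unfold nu
  have h1 : ∫⁻ t in Set.Icc s 1, ENNReal.ofReal (1 - t) ^ e =
      ∫⁻ t in Set.Icc s 1, ENNReal.ofReal ((1 - t) ^ e) := by
    refine setLIntegral_congr_fun measurableSet_Icc fun t ht => ?_
    exact (ENNReal.ofReal_pow (by linarith [ht.2]) e).symm
  rw [h1, ← ofReal_integral_eq_lintegral_ofReal, integral_Icc_eq_integral_Ioc,
    ← intervalIntegral.integral_of_le hs, ← ENNReal.ofReal_pow (by linarith),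
    ← ENNReal.ofReal_mul (by positivity)]
  · congr 1
    rw [intervalIntegral.integral_comp_sub_left (fun t => t ^ e) 1, integral_pow]
    simp; ring
  · exact (Continuous.integrableOn_Icc (by fun_prop))
  · filter_upwards [ae_restrict_mem measurableSet_Icc] with t ht
    have : 0 ≤ 1 - t := by linarith [ht.2]
    positivity

lemma nu_restrict (s t : ℝ) (hst : s ≤ t) (B : Set ℝ) (hB : B = Set.Ici t ∨ B = Set.Ioi t) :
    (nu s).restrict B = nu t := by
  unfold nu
  have hm : MeasurableSet B := by rcases hB with rfl | rfl <;> measurability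
  rw [Measure.restrict_restrict hm]
  rcases hB with rfl | rfl
  · congr 1
    ext x; simp; intro h _; linarith
  · have : Set.Ioi t ∩ Set.Icc s 1 = Set.Ioc t 1 := by
      ext x; simp; intro h _; linarith
    rw [this]
    exact Measure.restrict_congr_set Ioc_ae_eq_Icc

lemma lintegral_argSet (m a : ℕ) (p : Fin (m + 1)) (s : ℝ) :
    ∫⁻ x in argSet (m + 1) p, starF (m + 1) a x ∂(Measure.pi fun _ => nu s) =
      ∫⁻ t, ENNReal.ofReal (1 - t) ^ a *
        (∫⁻ y, starF m (a + 1) y ∂(Measure.pi fun _ => nu t)) ∂(nu s) := by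
  rw [← lintegral_indicator (measurableSet_argSet _ _)]
  have hmp := (measurePreserving_piFinSuccAbove (fun _ : Fin (m + 1) => nu s) p).symm
  have hF : Measurable ((argSet (m + 1) p).indicator (starF (m + 1) a)) :=
    (measurable_starF _ _).indicator (measurableSet_argSet _ _)
  rw [← hmp.lintegral_comp hF, 
    lintegral_prod _ (Measurable.aemeasurable (by
      exact hF.comp (MeasurableEquiv.measurable _)))]
  refine lintegral_congr_ae ?_
  have : ∀ᵐ t ∂(nu s), t ∈ Set.Icc s 1 := ae_restrict_mem measurableSet_Icc
  filter_upwards [this] with t ht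
  let B : Fin m → Set ℝ := fun j => if p.succAbove j < p then Set.Ioi t else Set.Ici t
  have hB : ∀ j, MeasurableSet (B j) := by
    intro j; simp only [B]; split_ifs <;> measurability
  have hB2 : ∀ j, B j = Set.Ici t ∨ B j = Set.Ioi t := by
    intro j; by_cases h : p.succAbove j < p <;> simp [B, h]
  have hr : (Measure.pi fun _ : Fin m => nu s).restrict (Set.univ.pi B) =
      Measure.pi fun _ => nu t := by
    rw [Measure.restrict_pi_pi]
    congr 1
    ext1 j
    exact nu_restrict s t ht.1 _ (hB2 j)
  rw [← hr, ← lintegral_const_mul _ (measurable_starF _ _),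
    ← lintegral_indicator (MeasurableSet.univ_pi hB)]
  refine lintegral_congr fun y => ?_
  have hiff : (p.insertNth t y : Fin (m + 1) → ℝ) ∈ argSet (m + 1) p ↔ y ∈ Set.univ.pi B := by
    simp only [argSet, Set.mem_ofPred_eq, Set.mem_univ_pi, B]
    rw [Fin.forall_iff_succAbove p]
    simp only [Fin.insertNth_apply_same, Fin.insertNth_apply_succAbove, lt_irrefl, if_false,
      le_refl, true_and]
    refine forall_congr' fun j => ?_
    split_ifs <;> simp
  change (argSet (m + 1) p).indicator (starF (m + 1) a) (p.insertNth t y) = _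
  by_cases hy : y ∈ Set.univ.pi B
  · rw [Set.indicator_of_mem (hiff.2 hy), Set.indicator_of_mem hy, starF_insert]
    intro j
    have := hy j (Set.mem_univ _)
    simp only [B] at this
    split_ifs at this
    · exact le_of_lt this
    · exact this
  · rw [Set.indicator_of_notMem (fun h => hy (hiff.1 h)), Set.indicator_of_notMem hy]

lemma lintegral_starF (m a : ℕ) (s : ℝ) (hs : s ≤ 1) :
    ∫⁻ x, starF m a x ∂(Measure.pi fun _ => nu s) =
      ENNReal.ofReal (starC m a) * ENNReal.ofReal (1 - s) ^ (m * (a + 1) + m.choose 2) := by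
  induction m generalizing a s with
  | zero =>
    rw [Measure.pi_of_empty _ default, lintegral_dirac]
    simp [starF, pairF, starC]
  | succ m ih =>
    rw [← setLIntegral_univ, ← argSet_union, lintegral_iUnion (measurableSet_argSet _)
      (argSet_disj _), tsum_fintype]
    simp only [lintegral_argSet]
    have h1 : ∫⁻ t, ENNReal.ofReal (1 - t) ^ a *
        (∫⁻ y, starF m (a + 1) y ∂(Measure.pi fun _ => nu t)) ∂(nu s) =
        ∫⁻ t, ENNReal.ofReal (starC m (a + 1)) *
          ENNReal.ofReal (1 - t) ^ (a + (m * (a + 1 + 1) + m.choose 2)) ∂(nu s) := by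
      refine lintegral_congr_ae ?_
      have : ∀ᵐ t ∂(nu s), t ∈ Set.Icc s 1 := ae_restrict_mem measurableSet_Icc
      filter_upwards [this] with t ht
      rw [ih _ _ ht.2, pow_add]
      ring
    rw [h1, lintegral_const_mul _ (by fun_prop), lintegral_one_dim s hs]
    have hexp : a + (m * (a + 1 + 1) + m.choose 2) + 1 =
        (m + 1) * (a + 1) + (m + 1).choose 2 := by
      rw [Nat.choose_succ_succ' m 1, Nat.choose_one_right]; ring
    rw [hexp]
    simp only [Finset.sum_const, Finset.card_univ, Fintype.card_fin, nsmul_eq_mul]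
    rw [starC, ← mul_assoc, ← mul_assoc]
    congr 1
    rw [← ENNReal.ofReal_natCast, ← ENNReal.ofReal_mul (by positivity),
      ← ENNReal.ofReal_mul (mul_nonneg (by positivity) (starC_nonneg _ _))]
    congr 1
    push_cast
    ring


/-- The edges of `K_{m+1}`: star edges and pairs of leaves. -/
def edgeMap (m : ℕ) (v : Fin (m + 1)) :
    Fin m ⊕ {p : Fin m × Fin m // p.1 < p.2} → (⊤ : SimpleGraph (Fin (m + 1))).edgeSet
  | .inl i => ⟨s(v, v.succAbove i), by simp [Fin.ne_succAbove]⟩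
  | .inr p => ⟨s(v.succAbove p.1.1, v.succAbove p.1.2), by simp [p.2.ne]⟩

lemma edgeMap_bijective (m : ℕ) (v : Fin (m + 1)) : Function.Bijective (edgeMap m v) := by
  constructor
  · rintro (i | ⟨⟨i, j⟩, hij⟩) (k | ⟨⟨k, l⟩, hkl⟩) h
    · have := congrArg Subtype.val h
      simp only [edgeMap] at this
      have := Fin.succAbove_right_injective (star_inj v this)
      rw [this]
    · have := congrArg Subtype.val h
      simp [edgeMap, Fin.ne_succAbove] at this
    · have := congrArg Subtype.val h
      simp [edgeMap, Fin.succAbove_ne] at this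
    · have := congrArg Subtype.val h
      simp only [edgeMap, Sym2.eq_iff, Fin.succAbove_right_inj] at this
      rcases this with ⟨rfl, rfl⟩ | ⟨rfl, rfl⟩
      · rfl
      · exact absurd hij hkl.not_gt
  · rintro ⟨e, he⟩
    induction e using Sym2.ind with
    | _ a b =>
    have hab : a ≠ b := by simpa using he
    by_cases ha : a = v
    · subst ha
      obtain ⟨i, rfl⟩ := Fin.exists_succAbove_eq hab.symm
      exact ⟨.inl i, rfl⟩
    by_cases hb : b = v
    · subst hb
      obtain ⟨i, rfl⟩ := Fin.exists_succAbove_eq hab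
      exact ⟨.inl i, Subtype.ext Sym2.eq_swap⟩
    obtain ⟨i, rfl⟩ := Fin.exists_succAbove_eq ha
    obtain ⟨j, rfl⟩ := Fin.exists_succAbove_eq hb
    have hij : i ≠ j := fun h => hab (by rw [h])
    rcases lt_or_gt_of_ne hij with h | h
    · exact ⟨.inr ⟨(i, j), h⟩, rfl⟩
    · exact ⟨.inr ⟨(j, i), h⟩, Subtype.ext Sym2.eq_swap⟩

lemma extW_inl (m : ℕ) (v : Fin (m + 1)) (w : (⊤ : SimpleGraph (Fin (m + 1))).edgeSet → ℝ)
    (i : Fin m) : extW ⊤ w s(v, v.succAbove i) = w (edgeMap m v (.inl i)) := by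
  unfold extW
  exact dif_pos (edgeMap m v (.inl i)).2

lemma extW_inr (m : ℕ) (v : Fin (m + 1)) (w : (⊤ : SimpleGraph (Fin (m + 1))).edgeSet → ℝ)
    (p : {p : Fin m × Fin m // p.1 < p.2}) :
    extW ⊤ w s(v.succAbove p.1.1, v.succAbove p.1.2) = w (edgeMap m v (.inr p)) := by
  unfold extW
  exact dif_pos (edgeMap m v (.inr p)).2

lemma mem_mstEvent_star' (m : ℕ) (v : Fin (m + 1)) (T : Finset (Sym2 (Fin (m + 1))))
    (hT : ∀ e, e ∈ T ↔ ¬ e.IsDiag ∧ v ∈ e) (w : (⊤ : SimpleGraph (Fin (m + 1))).edgeSet → ℝ) :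
    w ∈ mstEvent (⊤ : SimpleGraph (Fin (m + 1))) T ↔ ∀ p : {p : Fin m × Fin m // p.1 < p.2},
      max (w (edgeMap m v (.inl p.1.1))) (w (edgeMap m v (.inl p.1.2))) <
        w (edgeMap m v (.inr p)) := by
  rw [mem_mstEvent_star v T hT]
  constructor
  · intro h p
    have hne : v.succAbove p.1.1 ≠ v.succAbove p.1.2 := by simp [p.2.ne]
    rw [← extW_inl m v w, ← extW_inl m v w, ← extW_inr m v w, max_lt_iff]
    refine ⟨h _ _ hne (Fin.succAbove_ne _ _) (Fin.succAbove_ne _ _), ?_⟩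
    rw [Sym2.eq_swap (a := v.succAbove p.1.1)]
    exact h _ _ hne.symm (Fin.succAbove_ne _ _) (Fin.succAbove_ne _ _)
  · intro h a b hab ha hb
    obtain ⟨i, rfl⟩ := Fin.exists_succAbove_eq ha
    obtain ⟨j, rfl⟩ := Fin.exists_succAbove_eq hb
    have hij : i ≠ j := fun h => hab (by rw [h])
    rcases lt_or_gt_of_ne hij with hl | hl
    · have := h ⟨(i, j), hl⟩
      rw [← extW_inl m v w, ← extW_inl m v w, ← extW_inr m v w, max_lt_iff] at this
      exact this.1
    · have := h ⟨(j, i), hl⟩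
      rw [← extW_inl m v w, ← extW_inl m v w, ← extW_inr m v w, max_lt_iff] at this
      rw [Sym2.eq_swap (a := v.succAbove i)]
      exact this.2

lemma prod_pairs_eq (m : ℕ) (x : Fin m → ℝ) :
    ∏ p : {p : Fin m × Fin m // p.1 < p.2}, ENNReal.ofReal (1 - max (x p.1.1) (x p.1.2)) =
      pairF m x := by
  unfold pairF
  rw [← Fintype.prod_prod_type'
    (fun i j => if i < j then ENNReal.ofReal (1 - max (x i) (x j)) else 1)]
  rw [← Finset.prod_filter]
  symm
  exact Finset.prod_subtype _ (by simp) _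

lemma nu_Ioi (c : ℝ) (hc : 0 ≤ c) : nu 0 (Set.Ioi c) = ENNReal.ofReal (1 - c) := by
  unfold nu
  rw [Measure.restrict_apply measurableSet_Ioi]
  have : Set.Ioi c ∩ Set.Icc 0 1 = Set.Ioc c 1 := by
    ext x; simp; intro h _; linarith
  rw [this, Real.volume_Ioc]

lemma measure_event (m : ℕ) :
    ((Measure.pi fun _ : Fin m => nu 0).prod
      (Measure.pi fun _ : {p : Fin m × Fin m // p.1 < p.2} => nu 0))
      {q | ∀ p : {p : Fin m × Fin m // p.1 < p.2}, max (q.1 p.1.1) (q.1 p.1.2) < q.2 p} =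
    ENNReal.ofReal (starC m 0) := by
  have hm : MeasurableSet {q : (Fin m → ℝ) × ({p : Fin m × Fin m // p.1 < p.2} → ℝ) |
      ∀ p : {p : Fin m × Fin m // p.1 < p.2}, max (q.1 p.1.1) (q.1 p.1.2) < q.2 p} := by
    rw [Set.ofPred_forall]
    exact MeasurableSet.iInter fun p => measurableSet_lt (by fun_prop) (by fun_prop)
  rw [Measure.prod_apply hm]
  have key := lintegral_starF m 0 0 zero_le_one
  simp only [sub_zero, ENNReal.ofReal_one, one_pow, mul_one] at key
  rw [← key]
  refine lintegral_congr_ae ?_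
  have hpos : ∀ᵐ x ∂(Measure.pi fun _ : Fin m => nu 0), ∀ i, x i ∈ Set.Icc (0:ℝ) 1 := by
    rw [ae_all_iff]
    intro i
    exact (Measure.quasiMeasurePreserving_eval (μ := fun _ : Fin m => nu 0) i).ae
      (ae_restrict_mem measurableSet_Icc)
  filter_upwards [hpos] with x hx
  have hset : Prod.mk x ⁻¹' {q : (Fin m → ℝ) × ({p : Fin m × Fin m // p.1 < p.2} → ℝ) |
      ∀ p : {p : Fin m × Fin m // p.1 < p.2}, max (q.1 p.1.1) (q.1 p.1.2) < q.2 p} =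
      Set.univ.pi fun p => Set.Ioi (max (x p.1.1) (x p.1.2)) := by
    ext z; simp
  rw [hset, Measure.pi_pi]
  simp only [nu_Ioi _ (le_max_of_le_left (hx _).1)]
  rw [prod_pairs_eq]
  simp [starF]

/-- In the complete graph `K_n` (`n ≥ 2`), the star spanning tree `T⋆`, consisting of all
`n - 1` edges incident to a fixed vertex `v`, satisfies `P_MST(T⋆; K_n) = 1/(2n-3)!!`. -/
theorem star_mst_probability (n : ℕ) (hn : 2 ≤ n) (v : Fin n)
    (Tstar : Finset (Sym2 (Fin n)))
    (hstar : Tstar = (⊤ : SimpleGraph (Fin n)).edgeFinset.filter fun e => v ∈ e) :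
    mstProb (⊤ : SimpleGraph (Fin n)) Tstar
      = 1 / (Nat.doubleFactorial (2 * n - 3) : ℝ) := by
  obtain ⟨m, rfl⟩ : ∃ m, n = m + 1 := ⟨n - 1, by omega⟩
  have hT : ∀ e, e ∈ Tstar ↔ ¬ e.IsDiag ∧ v ∈ e := by
    intro e; rw [hstar]; simp
  have h1 : 2 * (m + 1) - 3 = 2 * m - 1 := by omega
  rw [h1, ← starC_zero]
  unfold mstProb edgeUniform
  let φ := Equiv.ofBijective _ (edgeMap_bijective m v)
  have A := measurePreserving_piCongrLeft
    (fun _ : (⊤ : SimpleGraph (Fin (m + 1))).edgeSet => nu 0) φ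
  have B := measurePreserving_sumPiEquivProdPi_symm
    (fun _ : Fin m ⊕ {p : Fin m × Fin m // p.1 < p.2} => nu 0)
  have C := A.comp B
  have hpre : ((MeasurableEquiv.piCongrLeft
      (fun _ : (⊤ : SimpleGraph (Fin (m + 1))).edgeSet => ℝ) φ) ∘
      (MeasurableEquiv.sumPiEquivProdPi
        (fun _ : Fin m ⊕ {p : Fin m × Fin m // p.1 < p.2} => ℝ)).symm) ⁻¹'
      (mstEvent (⊤ : SimpleGraph (Fin (m + 1))) Tstar) =
      {q | ∀ p : {p : Fin m × Fin m // p.1 < p.2}, max (q.1 p.1.1) (q.1 p.1.2) < q.2 p} := by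
    ext q
    rw [Set.mem_preimage, mem_mstEvent_star' m v Tstar hT]
    have hval : ∀ i, (MeasurableEquiv.piCongrLeft
      (fun _ : (⊤ : SimpleGraph (Fin (m + 1))).edgeSet => ℝ) φ)
      ((MeasurableEquiv.sumPiEquivProdPi
        (fun _ : Fin m ⊕ {p : Fin m × Fin m // p.1 < p.2} => ℝ)).symm q) (edgeMap m v i) =
      ((MeasurableEquiv.sumPiEquivProdPi
        (fun _ : Fin m ⊕ {p : Fin m × Fin m // p.1 < p.2} => ℝ)).symm q) i := by
      intro i
      exact Equiv.piCongrLeft_apply_apply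
        (fun _ : (⊤ : SimpleGraph (Fin (m + 1))).edgeSet => ℝ) φ _ i
    simp only [Function.comp_apply, hval]
    rfl
  have D := C.measure_preimage_emb
    ((MeasurableEquiv.measurableEmbedding _).comp (MeasurableEquiv.measurableEmbedding _))
    (mstEvent (⊤ : SimpleGraph (Fin (m + 1))) Tstar)
  rw [hpre, measure_event] at D
  rw [← ENNReal.toReal_ofReal (starC_nonneg m 0), D]
  unfold nu
  congr!

end RST
end
end
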